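/- arXiv:math/0509362 — 2 statements merged into one kernel-verified Lean document; each statement's English description precedes it below -/
import Mathlib

section
/- Suppose the Coxeter system (W, S) has Property F. Let w ∈ W_c and s ∈ S with ℓ(sw) > ℓ(w), and set x = sw. Then at least one of the following holds: (i) x is a reduced product of distinct pairwise commuting generators; (ii) x ∈ W_c and there exists t ∈ S with m(s,t) ≥ 3 such that in the coset decomposition x = x_I·x^I with respect to I = {s,t} one has ℓ(x_I) > 1; (iii) x is weakly complex and x has a reduced factorization beginning with the longest element w_{st} of ⟨s,t⟩ for some t ∈ S with 3 ≤ m(s,t) < ∞; (iv) there exist u, u′ ∈ S with m(u,u′) ≥ 3, s ∉ {u, u′}, su = us and su′ = u′s such that in the decomposition w = w_I·w^I with respect to I = {u, u′} one has ℓ(w_I) > 1; (v) there exist u, u′ ∈ S with m(u,u′) ≥ 3 such that in the right coset decomposition w = (^I w)·(_I w) with respect to I = {u, u′} one has ℓ(_I w) > 1; (vi) x is weakly complex and there exist t, u ∈ S with 3 ≤ m(s,t) < ∞, m(u,t) ≥ 3 and su = us such that w has a reduced factorization w = u·(t s t s ⋯)·x′, where the alternating product of t and s beginning with t has m(s,t)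 − 1 factors, and ℓ(u·(tuw)) > ℓ(tuw); (vii) x is weakly complex and there exist t, u ∈ S with m(s,t) = 3, m(u,t) ≥ 3 and su = us such that w has a reduced factorization w = u·t·s·u·x′. -/
open CoxeterSystem

variable {B W : Type*} [Group W] {M : CoxeterMatrix B} (cs : CoxeterSystem M W)

/-- `m(s,t) ≥ 3`: `s` and `t` are distinct noncommuting generators
(`M s t = 0` encodes `m(s,t) = ∞`). -/
def Noncomm (M : CoxeterMatrix B) (s t : B) : Prop := M s t = 0 ∨ 3 ≤ M s t

/-- The longest element `w_{st}` of the rank-2 parabolic subgroup `⟨s,t⟩`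
(meaningful when `3 ≤ M s t < ∞`). -/
def longest (s t : B) : W := cs.wordProd (alternatingWord s t (M s t))

/-- `w` is complex: it admits a reduced factorization `x₁ · w_{st} · x₂` where `w_{st}`
is the longest element of a rank-2 parabolic subgroup `⟨s,t⟩` with `3 ≤ m(s,t) < ∞`. -/
def IsComplex (w : W) : Prop :=
  ∃ s t : B, 3 ≤ M s t ∧ ∃ x₁ x₂ : W,
    w = x₁ * longest cs s t * x₂ ∧
    cs.length w = cs.length x₁ + cs.length (longest cs s t : W) + cs.length x₂

/-- `w` is fully commutative, i.e. `w ∈ W_c`. -/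
def FullyComm (w : W) : Prop := ¬ IsComplex cs w

/-- `x` is weakly complex: `x` is complex and `x = s·u` reduced with `u` fully commutative. -/
def IsWeaklyComplex (x : W) : Prop :=
  IsComplex cs x ∧ ∃ (s : B) (u : W), FullyComm cs u ∧ x = cs.simple s * u ∧
    cs.length x = 1 + cs.length u

/-- The alternating product `t s t s ⋯` with `k` factors, beginning with `t`. -/
def altProd (t s : B) (k : ℕ) : W :=
  cs.wordProd ((List.range k).map (fun i => if i % 2 = 0 then t else s))

/-- The left descent set `𝓛(w)`. -/
def leftDescents (w : W) : Set B := {i | cs.IsLeftDescent w i}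

/-- The right descent set `𝓡(w)`. -/
def rightDescents (w : W) : Set B := {i | cs.IsRightDescent w i}

/-- `w` is a reduced product of distinct pairwise commuting generators. -/
def IsCommProd (w : W) : Prop :=
  ∃ l : List B, l.Nodup ∧ (∀ u ∈ l, ∀ u' ∈ l, u ≠ u' → M u u' = 2) ∧
    cs.IsReduced l ∧ w = cs.wordProd l

/-- `y` is left star reducible to `x` with respect to the pair `{s,t}`:
`x` and `y` lie in the same left `{s,t}`-string and `ℓ(x) = ℓ(y) − 1`. -/
def LeftStarReducible (s t : B) (y x : W) : Prop :=
  Noncomm M s t ∧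
  ((cs.IsLeftDescent y s ∧ ¬ cs.IsLeftDescent y t ∧ x = cs.simple s * y ∧
      cs.IsLeftDescent x t) ∨
   (cs.IsLeftDescent y t ∧ ¬ cs.IsLeftDescent y s ∧ x = cs.simple t * y ∧
      cs.IsLeftDescent x s))

/-- `y` is right star reducible to `x` with respect to the pair `{s,t}`. -/
def RightStarReducible (s t : B) (y x : W) : Prop :=
  Noncomm M s t ∧
  ((cs.IsRightDescent y s ∧ ¬ cs.IsRightDescent y t ∧ x = y * cs.simple s ∧
      cs.IsRightDescent x t) ∨
   (cs.IsRightDescent y t ∧ ¬ cs.IsRightDescent y s ∧ x = y * cs.simple t ∧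
      cs.IsRightDescent x s))

/-- `y` is star reducible to `x`: there is a (possibly empty) chain of left and right
star reductions from `y` to `x`. -/
def StarReducible (y x : W) : Prop :=
  Relation.ReflTransGen
    (fun a b => ∃ s t : B, LeftStarReducible cs s t a b ∨ RightStarReducible cs s t a b) y x

/-- Property F: every fully commutative element is star reducible to a reduced product of
distinct pairwise commuting generators. -/
def PropertyF : Prop := ∀ w : W, FullyComm cs w → ∃ x : W, StarReducible cs w x ∧ IsCommProd cs x

/-- `n(w)`: the maximum `k` such that `w` admits a reduced factorization `w = w₁·w₂·w₃`
with `w₂` a reduced product of `k` distinct pairwise commuting generators. -/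
noncomputable def nval (w : W) : ℕ :=
  sSup {k | ∃ w₁ w₂ w₃ : W, w = w₁ * w₂ * w₃ ∧
    cs.length w = cs.length w₁ + cs.length w₂ + cs.length w₃ ∧
    IsCommProd cs w₂ ∧ cs.length w₂ = k}

/-- The Bruhat order: `x ≤ w` iff some reduced word for `w` has a subword that is a
reduced word for `x`. -/
def BruhatLE (x w : W) : Prop :=
  ∃ l l' : List B, cs.IsReduced l ∧ cs.wordProd l = w ∧
    l'.Sublist l ∧ cs.IsReduced l' ∧ cs.wordProd l' = x

/-- `w = wI · wII` is the coset decomposition of `w` with respect to `I = {s,t}`: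
`wI ∈ W_I`, `𝓛(wII) ∩ I = ∅` and `ℓ(w) = ℓ(wI) + ℓ(wII)`. -/
def CosetDecompL (s t : B) (w wI wII : W) : Prop :=
  w = wI * wII ∧ wI ∈ Subgroup.closure {cs.simple s, cs.simple t} ∧
  ¬ cs.IsLeftDescent wII s ∧ ¬ cs.IsLeftDescent wII t ∧
  cs.length w = cs.length wI + cs.length wII

/-- `w = wII · wI` is the right coset decomposition of `w` with respect to `I = {s,t}`:
`wI ∈ W_I`, `𝓡(wII) ∩ I = ∅` and `ℓ(w) = ℓ(wII) + ℓ(wI)`. -/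
def CosetDecompR (s t : B) (w wII wI : W) : Prop :=
  w = wII * wI ∧ wI ∈ Subgroup.closure {cs.simple s, cs.simple t} ∧
  ¬ cs.IsRightDescent wII s ∧ ¬ cs.IsRightDescent wII t ∧
  cs.length w = cs.length wII + cs.length wI

/-- `k_ε(J) = (−1)^{|J ∩ ε⁻¹(0)|}` for a set `J` of generators. -/
noncomputable def kSet (ε : B → Bool) (J : Set B) : ℤ :=
  (-1) ^ (J ∩ {i | ε i = false}).ncard

/-- `k_ε(w) = k_ε(𝓛(w)) · k_ε(𝓡(w))`. -/
noncomputable def kElt (ε : B → Bool) (w : W) : ℤ :=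
  kSet ε (leftDescents cs w) * kSet ε (rightDescents cs w)

section ReflectionRepresentation

open Polynomial.Chebyshev

/-- The value `-2 cos (π / M i j)` of the `i`-th coroot at the `j`-th simple root; if
`M i j = 0`, this is `-2`. -/
noncomputable def coxeterPairing (M : CoxeterMatrix B) (i j : B) : ℝ :=
  -2 * Real.cos (Real.pi / M i j)

/-- The `i`-th simple coroot, as a linear form on the space spanned by the simple roots. -/
noncomputable def simpleCoroot (M : CoxeterMatrix B) (i : B) : Module.Dual ℝ (B →₀ ℝ) :=
  Finsupp.linearCombination ℝ (coxeterPairing M i)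

theorem simpleCoroot_single (M : CoxeterMatrix B) (i j : B) :
    simpleCoroot M i (Finsupp.single j 1) = coxeterPairing M i j := by
  simp [simpleCoroot]

theorem simpleCoroot_self (M : CoxeterMatrix B) (i : B) :
    simpleCoroot M i (Finsupp.single i 1) = 2 := by
  simp [simpleCoroot_single, coxeterPairing]

/-- The reflection of the span of the simple roots associated with `i`. -/
noncomputable def simpleReflection (M : CoxeterMatrix B) (i : B) :
    (B →₀ ℝ) ≃ₗ[ℝ] (B →₀ ℝ) :=
  Module.reflection (simpleCoroot_self M i)

theorem coxeterPairing_mul_sub_two (M : CoxeterMatrix B) (i j : B) :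
    simpleCoroot M i (Finsupp.single j 1) * simpleCoroot M j (Finsupp.single i 1) - 2 =
      2 * Real.cos (2 * Real.pi / M i j) := by
  rw [simpleCoroot_single, simpleCoroot_single, coxeterPairing, coxeterPairing, M.symmetric j i,
    show 2 * Real.pi / (M i j : ℝ) = 2 * (Real.pi / M i j) by ring, Real.cos_two_mul]
  ring

theorem sin_two_pi_div_pos {m : ℕ} (hm : 3 ≤ m) : 0 < Real.sin (2 * Real.pi / m) := by
  have h : (3 : ℝ) ≤ m := by exact_mod_cast hm
  apply Real.sin_pos_of_pos_of_lt_pi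
  · have := Real.pi_pos
    positivity
  · rw [div_lt_iff₀ (by linarith)]
    nlinarith [Real.pi_pos]

theorem chebyshevS_add_eval_eq_zero {m : ℕ} (hm : 3 ≤ m) {a b : ℤ} (hab : a + b + 2 = m) :
    (S ℝ a).eval (2 * Real.cos (2 * Real.pi / m)) +
      (S ℝ b).eval (2 * Real.cos (2 * Real.pi / m)) = 0 := by
  have hs := sin_two_pi_div_pos hm
  have hm0 : (m : ℝ) ≠ 0 := by positivity
  refine (mul_eq_zero.mp ?_).resolve_right hs.ne'
  rw [add_mul, S_two_mul_real_cos, S_two_mul_real_cos]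
  have hb : ((b : ℝ) + 1) = m - (a + 1) := by
    have : ((a + b + 2 : ℤ) : ℝ) = m := by rw [hab]; simp
    push_cast at this
    linarith
  rw [hb, sub_mul, mul_div_cancel₀ _ hm0, Real.sin_two_pi_sub]
  ring

theorem simpleReflection_mul_pow (M : CoxeterMatrix B) (i j : B) :
    (simpleReflection M i * simpleReflection M j) ^ M i j = 1 := by
  by_cases hij : i = j
  · subst hij
    rw [M.diagonal, pow_one]
    ext1 z
    exact Module.involutive_reflection (simpleCoroot_self M i) z
  have h1 : M i j ≠ 1 := M.off_diagonal i j hij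
  ext1 z
  change _ = z
  rw [simpleReflection, simpleReflection,
    Module.reflection_mul_reflection_pow_apply _ _ _ _ _ (coxeterPairing_mul_sub_two M i j).symm]
  obtain h0 | h2 | h3 : M i j = 0 ∨ M i j = 2 ∨ 3 ≤ M i j := by omega
  · simp [h0]
  · have hfy : simpleCoroot M i (Finsupp.single j 1) = 0 := by
      simp [simpleCoroot_single, coxeterPairing, h2]
    have hgx : simpleCoroot M j (Finsupp.single i 1) = 0 := by
      simp [simpleCoroot_single, coxeterPairing, M.symmetric j i, h2]
    rw [hfy, hgx, h2]
    norm_num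
    abel
  · rcases Nat.even_or_odd' (M i j) with ⟨k, hk | hk⟩
    · have e1 : ((M i j : ℤ) - 2) / 2 = k - 1 := by omega
      have e2 : ((M i j : ℤ) - 1) / 2 = k - 1 := by omega
      have hz : (S ℝ (k - 1 : ℤ)).eval (2 * Real.cos (2 * Real.pi / M i j)) = 0 := by
        have := chebyshevS_add_eval_eq_zero h3 (a := k - 1) (b := k - 1) (by omega)
        linarith
      rw [e1, e2, hz]
      simp
    · have e1 : ((M i j : ℤ) - 1) / 2 = k := by omega
      have e2 : ((M i j : ℤ) - 3) / 2 = k - 1 := by omega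
      have e3 : (M i j : ℤ) / 2 = k := by omega
      have e4 : ((M i j : ℤ) - 2) / 2 = k - 1 := by omega
      rw [e1, e2, e3, e4, chebyshevS_add_eval_eq_zero h3 (a := k) (b := k - 1) (by omega)]
      simp

theorem dvd_of_simpleReflection_mul_pow_eq_one (M : CoxeterMatrix B) {i j : B} (hij : i ≠ j)
    {k : ℕ} (h : (simpleReflection M i * simpleReflection M j) ^ k = 1) : M i j ∣ k := by
  have h1 : M i j ≠ 1 := M.off_diagonal i j hij
  have key := Module.reflection_mul_reflection_pow_apply_self (simpleCoroot_self M i)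
    (simpleCoroot_self M j) k _ (coxeterPairing_mul_sub_two M i j).symm
  rw [← simpleReflection, ← simpleReflection, h] at key
  change Finsupp.single i 1 = _ at key
  have key1 := DFunLike.congr_fun key i
  have key2 := DFunLike.congr_fun key j
  simp only [Finsupp.coe_add, Finsupp.coe_smul, Pi.add_apply, Pi.smul_apply, Finsupp.single_eq_same,
    Finsupp.single_eq_of_ne hij, Finsupp.single_eq_of_ne hij.symm, smul_eq_mul, mul_zero, mul_one,
    add_zero, zero_add, simpleCoroot_single] at key1 key2
  obtain h0 | h2 | h3 : M i j = 0 ∨ M i j = 2 ∨ 3 ≤ M i j := by omega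
  · have hp : coxeterPairing M j i = -2 := by simp [coxeterPairing, M.symmetric j i, h0]
    rw [hp, h0] at key2
    simp at key2
    simp [h0, key2]
  · rw [h2, show (2 : ℝ) * Real.cos (2 * Real.pi / (2 : ℕ)) = -2 by norm_num] at key1
    rw [S_eval_neg_two, S_eval_neg_two] at key1
    rw [h2]
    by_contra hk
    have ho : Odd k := Nat.odd_iff.mpr (by omega)
    obtain ⟨c, rfl⟩ := ho
    rw [Int.negOnePow_odd _ ⟨c, by simp⟩, Int.negOnePow_even _ ⟨c, by push_cast; ring⟩] at key1
    push_cast at key1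
    linarith
  · have hs := sin_two_pi_div_pos h3
    have hm0 : (M i j : ℝ) ≠ 0 := by positivity
    have hp : coxeterPairing M j i ≠ 0 := by
      have h3' : (3 : ℝ) ≤ M i j := by exact_mod_cast h3
      have : 0 < Real.cos (Real.pi / M i j) := by
        apply Real.cos_pos_of_mem_Ioo
        constructor
        · have := Real.pi_pos
          have : 0 < Real.pi / M i j := by positivity
          linarith
        · exact div_lt_div_of_pos_left Real.pi_pos (by norm_num) (by linarith)
      rw [coxeterPairing, M.symmetric j i]
      nlinarith
    have hz : (S ℝ (k - 1 : ℤ)).eval (2 * Real.cos (2 * Real.pi / M i j)) = 0 := by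
      rcases mul_eq_zero.mp key2.symm with h | h
      · exact h
      · exact absurd (neg_eq_zero.mp h) hp
    rw [hz, add_zero] at key1
    have s1 := S_two_mul_real_cos (2 * Real.pi / M i j) (k - 1 : ℤ)
    have s2 := S_two_mul_real_cos (2 * Real.pi / M i j) (k : ℤ)
    rw [hz, zero_mul] at s1
    rw [← key1, one_mul] at s2
    push_cast at s1 s2
    rw [sub_add_cancel] at s1
    rw [add_mul, one_mul, Real.sin_add, ← s1, zero_mul, zero_add] at s2
    have hc : Real.cos (k * (2 * Real.pi / M i j)) = 1 := by
      apply mul_right_cancel₀ hs.ne'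
      rw [one_mul, ← s2]
    obtain ⟨n, hn⟩ := (Real.cos_eq_one_iff _).mp hc
    have : (n : ℝ) * M i j = k := by
      field_simp at hn
      exact hn
    have hZ : n * (M i j : ℤ) = k := by exact_mod_cast this
    exact Int.natCast_dvd_natCast.mp ⟨n, by rw [← hZ]; ring⟩

theorem coxeterMatrix_dvd_of_pow_eq_one {i j : B} (hij : i ≠ j) {k : ℕ}
    (h : (cs.simple i * cs.simple j) ^ k = 1) : M i j ∣ k := by
  apply dvd_of_simpleReflection_mul_pow_eq_one M hij
  rw [← cs.lift_apply_simple (simpleReflection_mul_pow M) i,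
    ← cs.lift_apply_simple (simpleReflection_mul_pow M) j, ← map_mul, ← map_pow, h, map_one]

end ReflectionRepresentation

section Exchange

open Classical in
/-- The action of the simple reflection `i` on pairs consisting of a group element, which is
conjugated, and a sign, which changes exactly when the element is the simple reflection itself. -/
noncomputable def signedConj (i : B) : Function.End (W × ZMod 2) := fun p =>
  (cs.simple i * p.1 * cs.simple i, p.2 + if p.1 = cs.simple i then 1 else 0)

open Classical in
theorem signedConj_mul_pow_apply (i j : B) (n : ℕ) (t : W) (ε : ZMod 2) :
    ((signedConj cs i * signedConj cs j) ^ n) (t, ε) =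
      ((cs.simple i * cs.simple j) ^ n * t * ((cs.simple i * cs.simple j) ^ n)⁻¹,
        ε + ∑ k ∈ Finset.range (2 * n),
          if t = (cs.simple j * cs.simple i) ^ k * cs.simple j then 1 else 0) := by
  induction n with
  | zero => simp; rfl
  | succ n ih =>
    have hinv : ((cs.simple i * cs.simple j) ^ n)⁻¹ = (cs.simple j * cs.simple i) ^ n := by
      rw [← inv_pow]; simp
    have hcomm : ∀ n : ℕ, cs.simple j * (cs.simple i * cs.simple j) ^ n =
        (cs.simple j * cs.simple i) ^ n * cs.simple j := by
      intro n
      induction n with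
      | zero => simp
      | succ n ih => rw [pow_succ, ← mul_assoc, ih, pow_succ]; simp only [mul_assoc]
    rw [pow_succ']
    change (signedConj cs i) (signedConj cs j
      (((signedConj cs i * signedConj cs j) ^ n) (t, ε))) = _
    rw [ih]
    simp only [signedConj]
    refine Prod.ext ?_ ?_
    · simp only
      rw [pow_succ' (cs.simple i * cs.simple j)]
      simp only [mul_inv_rev, cs.inv_simple, mul_assoc]
    · simp only
      rw [show 2 * (n + 1) = 2 * n + 1 + 1 by ring, Finset.sum_range_succ, Finset.sum_range_succ,
        ← add_assoc, ← add_assoc]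
      congr 1
      · congr 1
        refine if_congr ?_ rfl rfl
        rw [mul_inv_eq_iff_eq_mul, ← eq_inv_mul_iff_mul_eq, hinv, hcomm, ← mul_assoc, ← pow_add,
          two_mul]
      · refine if_congr ?_ rfl rfl
        rw [show ∀ x : W, cs.simple j * x * cs.simple j = cs.simple i ↔
          x = cs.simple j * cs.simple i * cs.simple j from fun x => by
            rw [← eq_mul_inv_iff_mul_eq, ← eq_inv_mul_iff_mul_eq]; simp [mul_assoc]]
        rw [mul_inv_eq_iff_eq_mul, ← eq_inv_mul_iff_mul_eq, hinv, mul_assoc _ (cs.simple j), hcomm]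
        rw [show 2 * n + 1 = n + (1 + n) by ring, pow_add, pow_add]
        simp only [mul_assoc, pow_one]

theorem isLiftable_signedConj : M.IsLiftable (signedConj cs) := by
  intro i j
  funext ⟨t, ε⟩
  change _ = (t, ε)
  have h₁ := cs.simple_mul_simple_pow i j
  have h₂ := cs.simple_mul_simple_pow' i j
  generalize M i j = m at h₁ h₂ ⊢
  rw [signedConj_mul_pow_apply, h₁, two_mul, Finset.sum_range_add]
  have hadd : ∀ a b : ZMod 2, a = b → a + b = 0 := by decide
  refine Prod.ext (by simp) ?_
  simp only
  rw [hadd _ _ (Finset.sum_congr rfl fun x _ => by rw [pow_add, h₂, one_mul]), add_zero]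

/-- The action of the Coxeter group on pairs of a group element and a sign. -/
noncomputable def signedConjHom : W →* Function.End (W × ZMod 2) :=
  cs.lift ⟨signedConj cs, isLiftable_signedConj cs⟩

theorem signedConjHom_simple (i : B) : signedConjHom cs (cs.simple i) = signedConj cs i :=
  cs.lift_apply_simple _ i

open Classical in
theorem signedConjHom_wordProd (ω : List B) (t : W) (ε : ZMod 2) :
    signedConjHom cs (cs.wordProd ω) (t, ε) =
      (cs.wordProd ω * t * (cs.wordProd ω)⁻¹, ε + (cs.rightInvSeq ω).count t) := by
  induction ω with
  | nil => simp; rfl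
  | cons i ω ih =>
    rw [cs.wordProd_cons, map_mul]
    change signedConjHom cs (cs.simple i) (signedConjHom cs (cs.wordProd ω) (t, ε)) = _
    rw [ih, signedConjHom_simple, signedConj]
    refine Prod.ext ?_ ?_
    · simp [mul_assoc]
    · simp only [rightInvSeq, List.count_cons, beq_iff_eq]
      have : cs.wordProd ω * t * (cs.wordProd ω)⁻¹ = cs.simple i ↔
          (cs.wordProd ω)⁻¹ * cs.simple i * cs.wordProd ω = t := by
        rw [mul_inv_eq_iff_eq_mul, ← eq_inv_mul_iff_mul_eq, eq_comm, mul_assoc]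
      simp only [this]
      push_cast
      rw [add_assoc]

theorem exists_eraseIdx_of_isRightDescent (ω : List B) (i : B)
    (h : cs.IsRightDescent (cs.wordProd ω) i) :
    ∃ j < ω.length, cs.wordProd ω * cs.simple i = cs.wordProd (ω.eraseIdx j) := by
  classical
  by_cases hmem : cs.simple i ∈ cs.rightInvSeq ω
  · obtain ⟨j, hj, hji⟩ := List.mem_iff_getElem.mp hmem
    refine ⟨j, by simpa using hj, ?_⟩
    rw [← cs.wordProd_mul_getD_rightInvSeq, List.getD_eq_getElem _ _ hj, hji]
  · exfalso
    obtain ⟨ω', hω', hprod⟩ := cs.exists_isReduced (cs.wordProd ω * cs.simple i)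
    have h1 := signedConjHom_wordProd cs ω' (cs.simple i) 0
    rw [← hprod, map_mul] at h1
    change signedConjHom cs (cs.wordProd ω)
      (signedConjHom cs (cs.simple i) (cs.simple i, 0)) = _ at h1
    rw [show signedConjHom cs (cs.simple i) (cs.simple i, 0) = (cs.simple i, 1) by
      rw [signedConjHom_simple]; simp [signedConj],
      signedConjHom_wordProd, List.count_eq_zero_of_not_mem hmem] at h1
    have h2 := congrArg Prod.snd h1
    simp only [Nat.cast_zero, add_zero, zero_add] at h2
    have hmem' : cs.simple i ∈ cs.rightInvSeq ω' := by
      by_contra hn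
      rw [List.count_eq_zero_of_not_mem hn] at h2
      simp at h2
    have h3 := (cs.isRightInversion_of_mem_rightInvSeq hω' hmem').2
    rw [← hprod] at h3
    simp only [cs.simple_mul_simple_cancel_right] at h3
    exact absurd h3 (not_lt.mpr h.le)

theorem exists_eraseIdx_of_isLeftDescent (ω : List B) (i : B)
    (h : cs.IsLeftDescent (cs.wordProd ω) i) :
    ∃ j < ω.length, cs.simple i * cs.wordProd ω = cs.wordProd (ω.eraseIdx j) := by
  have h' : cs.IsRightDescent (cs.wordProd ω.reverse) i := by
    rwa [cs.wordProd_reverse, cs.isRightDescent_inv_iff]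
  obtain ⟨j, hj, hprod⟩ := exists_eraseIdx_of_isRightDescent cs _ i h'
  rw [List.length_reverse] at hj
  refine ⟨ω.length - 1 - j, by omega, ?_⟩
  have := congrArg (·⁻¹) hprod
  simp only [cs.wordProd_reverse, mul_inv_rev, inv_inv, cs.inv_simple] at this
  rw [this, ← cs.wordProd_reverse]
  congr 1
  rw [List.eraseIdx_eq_take_drop_succ, List.eraseIdx_eq_take_drop_succ, List.reverse_append,
    List.take_reverse, List.drop_reverse]
  simp only [List.reverse_reverse]
  congr 2 <;> omega

end Exchange

section DihedralDescents

/-- The list `[t, s, t, s, …]` with `k` entries. -/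
def altList (t s : B) : ℕ → List B
  | 0 => []
  | k + 1 => t :: altList s t k

theorem length_altList (t s : B) (k : ℕ) : (altList t s k).length = k := by
  induction k generalizing t s with
  | zero => rfl
  | succ k ih => simp [altList, ih]

theorem mem_altList {t s c : B} {k : ℕ} (h : c ∈ altList t s k) : c = t ∨ c = s := by
  induction k generalizing t s with
  | zero => simp [altList] at h
  | succ k ih =>
    rcases List.mem_cons.mp h with h | h
    exacts [Or.inl h, (ih h).symm]

theorem reverse_alternatingWord (s t : B) (k : ℕ) :
    (alternatingWord s t k).reverse = altList t s k := by
  induction k generalizing t s with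
  | zero => rfl
  | succ k ih => simp [altList, alternatingWord_succ, ih]

theorem wordProd_altList (s t : B) (k : ℕ) :
    cs.wordProd (altList t s k) = (cs.wordProd (alternatingWord s t k))⁻¹ := by
  rw [← reverse_alternatingWord, cs.wordProd_reverse]

theorem altProd_eq_wordProd_altList (t s : B) (k : ℕ) :
    altProd cs t s k = cs.wordProd (altList t s k) := by
  unfold altProd
  congr 1
  induction k generalizing t s with
  | zero => rfl
  | succ k ih =>
    rw [altList, ← ih s t, List.range_succ_eq_map]
    simp only [List.map_cons, List.map_map, Nat.zero_mod, if_true]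
    congr 1
    refine List.map_congr_left fun i _ => ?_
    simp only [Function.comp]
    rcases Nat.mod_two_eq_zero_or_one i with h | h
    · rw [if_neg (by omega), if_pos h]
    · rw [if_pos (by omega), if_neg (by omega)]

theorem longest_comm (s t : B) : longest cs s t = longest cs t s :=
  cs.wordProd_braidWord_eq s t

theorem wordProd_alternatingWord_eq_iff (s t : B) (k : ℕ) :
    cs.wordProd (alternatingWord s t k) = cs.wordProd (alternatingWord t s k) ↔
      (cs.simple s * cs.simple t) ^ k = 1 := by
  have hinv : ∀ n : ℕ, (cs.simple t * cs.simple s) ^ n =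
      ((cs.simple s * cs.simple t) ^ n)⁻¹ := fun n => by rw [← inv_pow]; simp
  rw [cs.prod_alternatingWord_eq_mul_pow, cs.prod_alternatingWord_eq_mul_pow]
  rcases Nat.even_or_odd' k with ⟨n, rfl | rfl⟩
  · rw [if_pos (even_two_mul n), if_pos (even_two_mul n), one_mul, one_mul,
      Nat.mul_div_cancel_left _ two_pos, hinv, eq_inv_iff_mul_eq_one, two_mul, pow_add]
  · rw [if_neg (by simp), if_neg (by simp), show (2 * n + 1) / 2 = n by omega, hinv,
      eq_mul_inv_iff_mul_eq, show 2 * n + 1 = 1 + n + n by ring, pow_add, pow_add, pow_one,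
      mul_assoc, mul_assoc, mul_assoc, mul_eq_one_iff_inv_eq, cs.inv_simple, eq_comm]

theorem altList_eq_alternatingWord (t s : B) (k : ℕ) :
    altList t s k = if Even k then alternatingWord t s k else alternatingWord s t k := by
  induction k generalizing t s with
  | zero => rfl
  | succ k ih =>
    rw [altList, ih]
    by_cases h : Even k
    · rw [if_pos h, if_neg (by simp [h, parity_simps]), alternatingWord_succ', if_pos h]
    · rw [if_neg h, if_pos (by simp [h, parity_simps]), alternatingWord_succ', if_neg h]

theorem wordProd_altList_eq_longest (s t : B) :
    cs.wordProd (altList s t (M s t)) = longest cs s t := by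
  rw [altList_eq_alternatingWord]
  split_ifs
  · rfl
  · rw [M.symmetric, ← longest, longest_comm]

theorem inv_longest (s t : B) : (longest cs s t)⁻¹ = longest cs s t := by
  conv_lhs => rw [← wordProd_altList_eq_longest, wordProd_altList, inv_inv, M.symmetric s t]
  exact longest_comm cs t s

/-- A word in the letters `s` and `t` which is shortest among all such words
with the same product. -/
def IsDihedralShortest (s t : B) (v : List B) : Prop :=
  (∀ c ∈ v, c = s ∨ c = t) ∧
    ∀ v' : List B, (∀ c ∈ v', c = s ∨ c = t) → cs.wordProd v' = cs.wordProd v →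
      v.length ≤ v'.length

/-- `y` is shortest in its coset modulo the subgroup generated by `s` and `t` on the left. -/
def IsCosetShortest (s t : B) (y : W) : Prop :=
  ∀ v : List B, (∀ c ∈ v, c = s ∨ c = t) → cs.length y ≤ cs.length (cs.wordProd v * y)

theorem exists_dihedral_mul_coset (s t : B) (w : W) :
    ∃ v y, IsDihedralShortest cs s t v ∧ IsCosetShortest cs s t y ∧ w = cs.wordProd v * y := by
  classical
  have hne : ∃ n, ∃ v y, (∀ c ∈ v, c = s ∨ c = t) ∧ w = cs.wordProd v * y ∧ cs.length y = n :=
    ⟨_, [], w, by simp, by simp, rfl⟩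
  obtain ⟨v, y, hv, hw, hy⟩ := Nat.find_spec hne
  have hne' : ∃ n, ∃ v' : List B, (∀ c ∈ v', c = s ∨ c = t) ∧
      cs.wordProd v' = cs.wordProd v ∧ v'.length = n := ⟨_, v, hv, rfl, rfl⟩
  obtain ⟨v₁, hv₁, hprod, hlen⟩ := Nat.find_spec hne'
  refine ⟨v₁, y, ⟨hv₁, fun v' hv' h => ?_⟩, fun u hu => ?_, by rw [hprod, hw]⟩
  · rw [hlen]
    exact Nat.find_min' hne' ⟨v', hv', h.trans hprod, rfl⟩
  · rw [hy]
    refine Nat.find_min' hne ⟨v ++ u.reverse, cs.wordProd u * y, ?_, ?_, rfl⟩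
    · intro c hc
      rcases List.mem_append.mp hc with h | h
      · exact hv c h
      · exact hu c (List.mem_reverse.mp h)
    · rw [cs.wordProd_append, cs.wordProd_reverse, hw]
      group

variable {cs} in
/-- Applying the exchange condition to a product of a word in `s`, `t` and a shortest coset
representative, the erased letter lies in the first factor. -/
theorem IsCosetShortest.exists_eraseIdx {s t : B} {y : W} (hy : IsCosetShortest cs s t y)
    {v : List B} (hv : ∀ c ∈ v, c = s ∨ c = t) {i : B} (hi : i = s ∨ i = t)
    (h : cs.IsLeftDescent (cs.wordProd v * y) i) :
    ∃ j < v.length, cs.simple i * cs.wordProd v = cs.wordProd (v.eraseIdx j) := by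
  obtain ⟨ω, hω, rfl⟩ := cs.exists_isReduced y
  rw [← cs.wordProd_append] at h
  obtain ⟨j, hj, hprod⟩ := exists_eraseIdx_of_isLeftDescent cs _ i h
  rcases lt_or_ge j v.length with hjv | hjv
  · refine ⟨j, hjv, ?_⟩
    rw [List.eraseIdx_append_of_lt_length hjv, cs.wordProd_append, cs.wordProd_append,
      ← mul_assoc] at hprod
    exact mul_right_cancel hprod
  · exfalso
    rw [List.length_append] at hj
    rw [List.eraseIdx_append_of_length_le hjv, cs.wordProd_append, cs.wordProd_append] at hprod
    have h1 := hy (v.reverse ++ i :: v) (by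
      intro c hc
      simp only [List.mem_append, List.mem_reverse, List.mem_cons] at hc
      rcases hc with hc | rfl | hc
      exacts [hv c hc, hi, hv c hc])
    rw [cs.wordProd_append, cs.wordProd_reverse, cs.wordProd_cons, mul_assoc, mul_assoc, hprod,
      inv_mul_cancel_left] at h1
    have h2 := cs.length_wordProd_le (ω.eraseIdx (j - v.length))
    rw [List.length_eraseIdx_of_lt (by omega)] at h2
    rw [hω.eq] at h1
    omega

theorem length_dihedral_mul_coset {s t : B} {y : W} (hy : IsCosetShortest cs s t y)
    {v : List B} (hv : IsDihedralShortest cs s t v) :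
    cs.length (cs.wordProd v * y) = v.length + cs.length y := by
  induction v with
  | nil => simp
  | cons i v ih =>
    have hi := hv.1 i (by simp)
    have hvm : ∀ c ∈ v, c = s ∨ c = t := fun c hc => hv.1 c (by simp [hc])
    have ih := ih ⟨hvm, fun v' hv' h => by
      have := hv.2 (i :: v') (by simpa using ⟨hi, hv'⟩) (by
        rw [cs.wordProd_cons, cs.wordProd_cons, h])
      simpa using this⟩
    rw [cs.wordProd_cons, mul_assoc, List.length_cons]
    rcases cs.length_simple_mul (cs.wordProd v * y) i with h | h
    · rw [h, ih]; ring
    · exfalso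
      obtain ⟨j, hj, hprod⟩ := hy.exists_eraseIdx hvm hi (cs.isLeftDescent_iff.mpr h)
      have := hv.2 (v.eraseIdx j) (fun c hc => hvm c (List.mem_of_mem_eraseIdx hc)) (by
        rw [cs.wordProd_cons, hprod])
      rw [List.length_eraseIdx_of_lt hj, List.length_cons] at this
      omega

theorem eq_altList_of_isReduced {s t : B} {v : List B} (hv : ∀ c ∈ v, c = s ∨ c = t)
    (hred : cs.IsReduced (s :: v)) : s :: v = altList s t (v.length + 1) := by
  induction v generalizing s t with
  | nil => rfl
  | cons c v ih =>
    rw [altList]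
    congr 1
    have hc : c = t := by
      refine (hv c (by simp)).resolve_left ?_
      rintro rfl
      have := hred.eq
      rw [cs.wordProd_cons, cs.wordProd_cons, cs.simple_mul_simple_cancel_left] at this
      have := cs.length_wordProd_le v
      simp only [List.length_cons] at *
      omega
    subst hc
    exact ih (fun d hd => (hv d (by simp [hd])).symm) (by simpa using hred.drop 1)

/-- If `s ≠ t` are both left descents of `w`, then `m(s,t)` is finite and `w` has a reduced
factorization beginning with the longest element of `⟨s,t⟩`. -/
theorem eq_longest_mul_of_isLeftDescent {s t : B} (hst : s ≠ t) {w : W}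
    (hs : cs.IsLeftDescent w s) (ht : cs.IsLeftDescent w t) :
    M s t ≠ 0 ∧ ∃ y, w = cs.wordProd (altList s t (M s t)) * y ∧
      cs.length w = M s t + cs.length y := by
  obtain ⟨v, y, hv, hy, rfl⟩ := exists_dihedral_mul_coset cs s t w
  have key : ∀ i, (i = s ∨ i = t) → cs.IsLeftDescent (cs.wordProd v * y) i →
      ∃ v', v'.length + 1 = v.length ∧ (∀ c ∈ v', c = s ∨ c = t) ∧ cs.IsReduced (i :: v') ∧
        cs.wordProd (i :: v') = cs.wordProd v := by
    intro i hi h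
    obtain ⟨j, hj, hprod⟩ := hy.exists_eraseIdx hv.1 hi h
    have hlen : (v.eraseIdx j).length + 1 = v.length := by
      rw [List.length_eraseIdx_of_lt hj]; omega
    have hmem : ∀ c ∈ v.eraseIdx j, c = s ∨ c = t :=
      fun c hc => hv.1 c (List.mem_of_mem_eraseIdx hc)
    have hprod' : cs.wordProd (i :: v.eraseIdx j) = cs.wordProd v := by
      rw [cs.wordProd_cons, ← hprod, cs.simple_mul_simple_cancel_left]
    refine ⟨_, hlen, hmem, ?_, hprod'⟩
    have h1 := length_dihedral_mul_coset cs hy hv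
    have h2 := cs.length_mul_le (cs.wordProd v) y
    have h3 := cs.length_wordProd_le (i :: v.eraseIdx j)
    unfold CoxeterSystem.IsReduced
    rw [hprod'] at h3 ⊢
    simp only [List.length_cons] at *
    omega
  obtain ⟨v₁, hl₁, hm₁, hr₁, hp₁⟩ := key s (Or.inl rfl) hs
  obtain ⟨v₂, hl₂, hm₂, hr₂, hp₂⟩ := key t (Or.inr rfl) ht
  have e₁ := eq_altList_of_isReduced cs hm₁ hr₁
  have e₂ := eq_altList_of_isReduced cs (fun c hc => (hm₂ c hc).symm) hr₂
  rw [hl₁] at e₁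
  rw [hl₂] at e₂
  have hpow : (cs.simple s * cs.simple t) ^ v.length = 1 := by
    rw [← wordProd_alternatingWord_eq_iff, ← inv_inj, ← wordProd_altList, ← wordProd_altList,
      ← e₁, ← e₂, hp₁, hp₂]
  have hdvd := coxeterMatrix_dvd_of_pow_eq_one cs hst hpow
  have hM : M s t ≠ 0 := fun h => by rw [h, zero_dvd_iff] at hdvd; omega
  have hle : M s t ≤ v.length := Nat.le_of_dvd (by omega) hdvd
  have hge : v.length ≤ M s t := by
    by_contra hlt
    refine cs.not_isReduced_alternatingWord s t (m := v.length) hM (by omega) ?_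
    rw [← cs.isReduced_reverse_iff, reverse_alternatingWord, ← e₂]
    exact hr₂
  have heq : v.length = M s t := le_antisymm hge hle
  refine ⟨hM, y, ?_, ?_⟩
  · rw [← heq, ← e₁, hp₁]
  · rw [length_dihedral_mul_coset cs hy hv, heq]

theorem exists_altList_add (c d : B) (k n : ℕ) :
    ∃ c' d', (c' = c ∧ d' = d ∨ c' = d ∧ d' = c) ∧
      altList c d (k + n) = altList c d k ++ altList c' d' n := by
  induction k generalizing c d with
  | zero => exact ⟨c, d, Or.inl ⟨rfl, rfl⟩, by simp [altList]⟩
  | succ k ih =>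
    obtain ⟨c', d', h, heq⟩ := ih d c
    refine ⟨c', d', h.symm, ?_⟩
    rw [Nat.add_right_comm, altList, heq, altList, List.cons_append]

theorem length_wordProd_mod_two (ω : List B) :
    cs.length (cs.wordProd ω) % 2 = ω.length % 2 := by
  induction ω with
  | nil => simp
  | cons c ω ih =>
    rw [cs.wordProd_cons, List.length_cons]
    rcases cs.length_simple_mul (cs.wordProd ω) c with h | h <;> omega

theorem wordProd_altList_ne_one {c d : B} (hcd : c ≠ d) {n : ℕ} (hn : 0 < n) (hM : n ≤ M c d) :
    cs.wordProd (altList c d n) ≠ 1 := by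
  intro h
  have hpar := length_wordProd_mod_two cs (altList c d n)
  rw [h, cs.length_one, length_altList] at hpar
  rw [wordProd_altList, inv_eq_one, cs.prod_alternatingWord_eq_mul_pow,
    if_pos (Nat.even_iff.mpr hpar.symm), one_mul] at h
  have hdvd := coxeterMatrix_dvd_of_pow_eq_one cs hcd.symm h
  rw [M.symmetric] at hdvd
  have := Nat.le_of_dvd (by omega) hdvd
  omega

theorem length_longest {s t : B} (hst : s ≠ t) (hM : M s t ≠ 0) :
    cs.length (longest cs s t) = M s t := by
  have hone : IsCosetShortest cs s t 1 := fun v _ => by simp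
  have key : ∀ c d, (c = s ∧ d = t ∨ c = t ∧ d = s) → ∀ k ≤ M s t,
      cs.wordProd (altList c d k) = longest cs s t → k = M s t := by
    intro c d hcd k hk hprod
    have hlong : longest cs s t = longest cs c d := by
      rcases hcd with ⟨rfl, rfl⟩ | ⟨rfl, rfl⟩
      exacts [rfl, longest_comm cs _ _]
    have hMcd : M s t = M c d := by
      rcases hcd with ⟨rfl, rfl⟩ | ⟨rfl, rfl⟩
      exacts [rfl, M.symmetric _ _]
    rw [hMcd] at hk ⊢
    obtain ⟨n, hn⟩ := Nat.exists_eq_add_of_le hk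
    obtain ⟨c', d', h', heq⟩ := exists_altList_add c d k n
    rw [hlong, ← wordProd_altList_eq_longest, hn, heq, cs.wordProd_append, left_eq_mul] at hprod
    have hne : c' ≠ d' := by
      rcases hcd with ⟨rfl, rfl⟩ | ⟨rfl, rfl⟩ <;> rcases h' with ⟨rfl, rfl⟩ | ⟨rfl, rfl⟩
      exacts [hst, hst.symm, hst.symm, hst]
    have hMc' : M c' d' = M c d := by
      rcases h' with ⟨rfl, rfl⟩ | ⟨rfl, rfl⟩
      exacts [rfl, M.symmetric _ _]
    by_contra hlt
    exact wordProd_altList_ne_one cs hne (by omega) (by omega) hprod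
  obtain ⟨v, y, hv, hy, hvy⟩ := exists_dihedral_mul_coset cs s t (longest cs s t)
  have hmem : ∀ c ∈ altList s t (M s t), c = s ∨ c = t := fun c => mem_altList
  have hy1 : y = 1 := by
    have := hy (altList s t (M s t) ++ v) (fun c hc => (List.mem_append.mp hc).elim
      (hmem c) (hv.1 c))
    rw [cs.wordProd_append, mul_assoc, ← hvy, wordProd_altList_eq_longest,
      mul_eq_one_iff_eq_inv.mpr (inv_longest cs s t).symm, cs.length_one] at this
    exact cs.length_eq_zero_iff.mp (by omega)
  rw [hy1, mul_one] at hvy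
  have hle := hv.2 _ hmem (by rw [wordProd_altList_eq_longest, hvy])
  rw [length_altList] at hle
  have hlen := length_dihedral_mul_coset cs hone hv
  rw [mul_one, cs.length_one, add_zero] at hlen
  rw [hvy, hlen]
  cases v with
  | nil => exact key s t (Or.inl ⟨rfl, rfl⟩) 0 hle hvy.symm
  | cons c v =>
    have hv' : ∀ d ∈ v, d = s ∨ d = t := fun d hd => hv.1 d (by simp [hd])
    rcases hv.1 c (by simp) with rfl | rfl
    · refine key c t (Or.inl ⟨rfl, rfl⟩) _ hle ?_
      rw [List.length_cons, ← eq_altList_of_isReduced cs hv' hlen, hvy]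
    · refine key c s (Or.inr ⟨rfl, rfl⟩) _ hle ?_
      rw [List.length_cons, ← eq_altList_of_isReduced cs (fun d hd => (hv' d hd).symm) hlen, hvy]

end DihedralDescents

section CosetDecomposition

variable {cs} in
theorem CosetDecompL.simple_mul {s t i : B} {v vI vII : W} (h : CosetDecompL cs s t v vI vII)
    (hi : i = s ∨ i = t) (hlen : cs.length (cs.simple i * v) = cs.length v + 1) :
    CosetDecompL cs s t (cs.simple i * v) (cs.simple i * vI) vII ∧
      cs.length (cs.simple i * vI) = cs.length vI + 1 := by
  obtain ⟨rfl, hmem, hs, ht, hadd⟩ := h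
  have h₁ := cs.length_mul_le (cs.simple i * vI) vII
  have h₂ := cs.length_mul_le (cs.simple i) vI
  rw [cs.length_simple] at h₂
  rw [mul_assoc] at h₁
  have h₃ : cs.length (cs.simple i * vI) = cs.length vI + 1 := by omega
  refine ⟨⟨(mul_assoc _ _ _).symm, mul_mem (Subgroup.subset_closure ?_) hmem, hs, ht, by omega⟩, h₃⟩
  rcases hi with rfl | rfl <;> simp

theorem exists_cosetDecompL (s t : B) (v : W) : ∃ vI vII, CosetDecompL cs s t v vI vII := by
  induction hn : cs.length v generalizing v with
  | zero =>
    rw [cs.length_eq_zero_iff] at hn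
    subst hn
    exact ⟨1, 1, by simp, one_mem _, cs.not_isLeftDescent_one s, cs.not_isLeftDescent_one t,
      by simp⟩
  | succ n ih =>
    have peel : ∀ i, (i = s ∨ i = t) → cs.IsLeftDescent v i →
        ∃ vI vII, CosetDecompL cs s t v vI vII := by
      intro i hi hd
      have hlen := cs.isLeftDescent_iff.mp hd
      obtain ⟨vI, vII, h⟩ := ih (cs.simple i * v) (by omega)
      have := (h.simple_mul hi (by rw [cs.simple_mul_simple_cancel_left, hlen])).1
      rw [cs.simple_mul_simple_cancel_left] at this
      exact ⟨_, _, this⟩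
    by_cases hs : cs.IsLeftDescent v s
    · exact peel s (Or.inl rfl) hs
    by_cases ht : cs.IsLeftDescent v t
    · exact peel t (Or.inr rfl) ht
    exact ⟨1, v, by simp, one_mem _, hs, ht, by simp⟩

theorem exists_cosetDecompL_one_lt {p q : B} {b : List B} (h : cs.IsReduced (p :: q :: b)) :
    ∃ wI wII, CosetDecompL cs p q (cs.wordProd (p :: q :: b)) wI wII ∧ 1 < cs.length wI := by
  obtain ⟨vI, vII, hv⟩ := exists_cosetDecompL cs p q (cs.wordProd b)
  have h₁ : cs.IsReduced (q :: b) := by simpa using h.drop 1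
  have h₂ : cs.IsReduced b := by simpa using h.drop 2
  obtain ⟨hq, hlq⟩ := hv.simple_mul (i := q) (Or.inr rfl) (by
    rw [← cs.wordProd_cons, h₁.eq, h₂.eq, List.length_cons])
  obtain ⟨hp, hlp⟩ := hq.simple_mul (i := p) (Or.inl rfl) (by
    rw [← cs.wordProd_cons, ← cs.wordProd_cons, h.eq, h₁.eq, List.length_cons])
  rw [← cs.wordProd_cons, ← cs.wordProd_cons] at hp
  exact ⟨_, _, hp, by omega⟩

variable {cs} in
theorem CosetDecompL.inv {s t : B} {w wI wII : W} (h : CosetDecompL cs s t w wI wII) :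
    CosetDecompR cs s t w⁻¹ wII⁻¹ wI⁻¹ := by
  obtain ⟨rfl, hmem, hs, ht, hadd⟩ := h
  refine ⟨mul_inv_rev _ _, inv_mem hmem, ?_, ?_, ?_⟩
  · rwa [cs.isRightDescent_inv_iff]
  · rwa [cs.isRightDescent_inv_iff]
  · rw [cs.length_inv, cs.length_inv, cs.length_inv, hadd, add_comm]

theorem exists_cosetDecompR_one_lt {p q : B} {b : List B} (h : cs.IsReduced (b ++ [p, q])) :
    ∃ wII wI, CosetDecompR cs p q (cs.wordProd (b ++ [p, q])) wII wI ∧ 1 < cs.length wI := by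
  obtain ⟨wI, wII, hd, hlt⟩ := exists_cosetDecompL_one_lt cs (p := q) (q := p) (b := b.reverse)
    (by rw [← cs.isReduced_reverse_iff]; simpa using h)
  obtain ⟨h1, h2, h3, h4, h5⟩ := hd.inv
  refine ⟨wII⁻¹, wI⁻¹, ⟨?_, by rwa [Set.pair_comm], h4, h3, ?_⟩, by rwa [cs.length_inv]⟩
  · rw [← h1, ← cs.wordProd_reverse]; simp
  · rw [← h5, ← cs.wordProd_reverse]; simp

end CosetDecomposition

section Words

/-- Two words are equivalent if they have the same product and the same length. -/
def WordEquiv (l l' : List B) : Prop := cs.wordProd l = cs.wordProd l' ∧ l.length = l'.length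

variable {cs}

theorem WordEquiv.refl (l : List B) : WordEquiv cs l l := ⟨rfl, rfl⟩

theorem WordEquiv.symm {l l' : List B} (h : WordEquiv cs l l') : WordEquiv cs l' l :=
  ⟨h.1.symm, h.2.symm⟩

theorem WordEquiv.trans {l₁ l₂ l₃ : List B} (h : WordEquiv cs l₁ l₂) (h' : WordEquiv cs l₂ l₃) :
    WordEquiv cs l₁ l₃ := ⟨h.1.trans h'.1, h.2.trans h'.2⟩

theorem WordEquiv.append {l₁ l₂ l₁' l₂' : List B} (h : WordEquiv cs l₁ l₁')
    (h' : WordEquiv cs l₂ l₂') : WordEquiv cs (l₁ ++ l₂) (l₁' ++ l₂') :=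
  ⟨by rw [cs.wordProd_append, cs.wordProd_append, h.1, h'.1],
    by rw [List.length_append, List.length_append, h.2, h'.2]⟩

theorem WordEquiv.append_left (a : List B) {l l' : List B} (h : WordEquiv cs l l') :
    WordEquiv cs (a ++ l) (a ++ l') := (WordEquiv.refl a).append h

theorem WordEquiv.append_right (b : List B) {l l' : List B} (h : WordEquiv cs l l') :
    WordEquiv cs (l ++ b) (l' ++ b) := h.append (WordEquiv.refl b)

theorem WordEquiv.cons (c : B) {l l' : List B} (h : WordEquiv cs l l') :
    WordEquiv cs (c :: l) (c :: l') := h.append_left [c]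

theorem WordEquiv.of_cons {c : B} {l l' : List B} (h : WordEquiv cs (c :: l) (c :: l')) :
    WordEquiv cs l l' :=
  ⟨by have := h.1; rw [cs.wordProd_cons, cs.wordProd_cons] at this; exact mul_left_cancel this,
    by simpa using h.2⟩

theorem WordEquiv.reverse {l l' : List B} (h : WordEquiv cs l l') :
    WordEquiv cs l.reverse l'.reverse :=
  ⟨by rw [cs.wordProd_reverse, cs.wordProd_reverse, h.1], by simp [h.2]⟩

theorem WordEquiv.isReduced {l l' : List B} (h : WordEquiv cs l l') (hl : cs.IsReduced l) :
    cs.IsReduced l' := by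
  unfold CoxeterSystem.IsReduced
  rw [← h.1, ← h.2]
  exact hl

/-- Every letter of `a` commutes with, and is distinct from, `s`. -/
def CommutesWith (M : CoxeterMatrix B) (s : B) (a : List B) : Prop := ∀ c ∈ a, M s c = 2

theorem commutesWith_nil (s : B) : CommutesWith M s [] := by simp [CommutesWith]

theorem commutesWith_cons {s c : B} {a : List B} :
    CommutesWith M s (c :: a) ↔ M s c = 2 ∧ CommutesWith M s a := by simp [CommutesWith]

theorem commutesWith_append {s : B} {a b : List B} :
    CommutesWith M s (a ++ b) ↔ CommutesWith M s a ∧ CommutesWith M s b := by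
  simp [CommutesWith, or_imp, forall_and]

theorem commutesWith_reverse {s : B} {a : List B} :
    CommutesWith M s a.reverse ↔ CommutesWith M s a := by simp [CommutesWith]

theorem CommutesWith.notMem {s : B} {a : List B} (h : CommutesWith M s a) : s ∉ a := fun hs => by
  have := h s hs
  rw [M.diagonal] at this
  omega

theorem simple_mul_simple_comm (cs : CoxeterSystem M W) {s t : B} (h : M s t = 2) :
    cs.simple s * cs.simple t = cs.simple t * cs.simple s := by
  have := cs.simple_mul_simple_pow s t
  rw [h, pow_two, mul_eq_one_iff_eq_inv] at this
  rw [this]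
  simp

theorem CommutesWith.wordEquiv (cs : CoxeterSystem M W) {s : B} {a : List B}
    (h : CommutesWith M s a) (b : List B) : WordEquiv cs (a ++ s :: b) (s :: (a ++ b)) := by
  induction a with
  | nil => exact WordEquiv.refl _
  | cons c a ih =>
    rw [commutesWith_cons] at h
    refine ((ih h.2).cons c).trans ⟨?_, by simp⟩
    simp only [List.cons_append, cs.wordProd_cons, ← mul_assoc]
    rw [simple_mul_simple_comm cs h.1]

theorem noncomm_comm {s t : B} : Noncomm M s t ↔ Noncomm M t s := by
  unfold Noncomm; rw [M.symmetric]

theorem Noncomm.ne_two {s t : B} (h : Noncomm M s t) : M s t ≠ 2 := by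
  rcases h with h | h <;> omega

theorem Noncomm.ne {s t : B} (h : Noncomm M s t) : s ≠ t := by
  rintro rfl
  rcases h with h | h <;> rw [M.diagonal] at h <;> omega

end Words

section FullyCommutative

theorem isComplex_mul_left {x y : W} (hlen : cs.length (x * y) = cs.length x + cs.length y)
    (h : IsComplex cs y) : IsComplex cs (x * y) := by
  obtain ⟨s, t, hst, x₁, x₂, rfl, hl⟩ := h
  refine ⟨s, t, hst, x * x₁, x₂, by simp only [mul_assoc], ?_⟩
  have h₁ := cs.length_mul_le x x₁
  have h₂ := cs.length_mul_le (x * x₁) (longest cs s t)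
  have h₃ := cs.length_mul_le (x * x₁ * longest cs s t) x₂
  simp only [mul_assoc] at *
  omega

theorem isComplex_inv {x : W} (h : IsComplex cs x) : IsComplex cs x⁻¹ := by
  obtain ⟨s, t, hst, x₁, x₂, rfl, hl⟩ := h
  refine ⟨s, t, hst, x₂⁻¹, x₁⁻¹, by simp only [mul_inv_rev, inv_longest, mul_assoc], ?_⟩
  simp only [cs.length_inv]
  omega

/-- A reduced word of a fully commutative element. -/
def IsFCWord (l : List B) : Prop := cs.IsReduced l ∧ FullyComm cs (cs.wordProd l)

variable {cs}

theorem WordEquiv.isFCWord {l l' : List B} (h : WordEquiv cs l l') (hl : IsFCWord cs l) :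
    IsFCWord cs l' := ⟨h.isReduced hl.1, h.1 ▸ hl.2⟩

theorem IsFCWord.reverse {l : List B} (hl : IsFCWord cs l) : IsFCWord cs l.reverse := by
  refine ⟨hl.1.reverse, fun h => hl.2 ?_⟩
  have := isComplex_inv cs h
  rwa [cs.wordProd_reverse, inv_inv] at this

theorem isReduced_append_right {a b : List B} (h : cs.IsReduced (a ++ b)) : cs.IsReduced b := by
  simpa using h.drop a.length

theorem isReduced_append_left {a b : List B} (h : cs.IsReduced (a ++ b)) : cs.IsReduced a := by
  simpa using h.take a.length

theorem IsFCWord.append_right {a b : List B} (h : IsFCWord cs (a ++ b)) : IsFCWord cs b := by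
  have hb := isReduced_append_right h.1
  refine ⟨hb, fun hc => h.2 ?_⟩
  rw [cs.wordProd_append]
  refine isComplex_mul_left cs ?_ hc
  rw [← cs.wordProd_append, h.1.eq, hb.eq, (isReduced_append_left h.1).eq, List.length_append]

theorem IsFCWord.append_left {a b : List B} (h : IsFCWord cs (a ++ b)) : IsFCWord cs a := by
  have := h.reverse
  rw [List.reverse_append] at this
  simpa using this.append_right.reverse

theorem IsFCWord.of_cons {c : B} {l : List B} (h : IsFCWord cs (c :: l)) : IsFCWord cs l :=
  IsFCWord.append_right (a := [c]) h

theorem isLeftDescent_cons {c : B} {l : List B} (h : cs.IsReduced (c :: l)) :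
    cs.IsLeftDescent (cs.wordProd (c :: l)) c := by
  have hl : cs.IsReduced l := isReduced_append_right (a := [c]) h
  rw [cs.isLeftDescent_iff, h.eq, cs.wordProd_cons, cs.simple_mul_simple_cancel_left, hl.eq,
    List.length_cons]

/-- Distinct left descents of a fully commutative element commute. -/
theorem FullyComm.eq_two_of_isLeftDescent {w : W} (hw : FullyComm cs w) {s t : B} (hst : s ≠ t)
    (hs : cs.IsLeftDescent w s) (ht : cs.IsLeftDescent w t) : M s t = 2 := by
  obtain ⟨h0, y, hy, hlen⟩ := eq_longest_mul_of_isLeftDescent cs hst hs ht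
  have h1 := M.off_diagonal s t hst
  by_contra h2
  refine hw ⟨s, t, by omega, 1, y, ?_, ?_⟩
  · rw [one_mul, ← wordProd_altList_eq_longest, hy]
  · rw [cs.length_one, length_longest cs hst h0, hlen]; ring

theorem isLeftDescent_simple_mul {w : W} {s t : B} (h : M s t = 2)
    (hs : cs.IsLeftDescent w s) (ht : cs.IsLeftDescent w t) :
    cs.IsLeftDescent (cs.simple t * w) s := by
  have hst : s ≠ t := by rintro rfl; rw [M.diagonal] at h; omega
  obtain ⟨-, y, hy, hlen⟩ := eq_longest_mul_of_isLeftDescent cs hst hs ht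
  rw [h] at hy hlen
  simp only [altList, cs.wordProd_cons, cs.wordProd_nil, mul_one] at hy
  rw [cs.isLeftDescent_iff] at ht ⊢
  have : cs.simple s * (cs.simple t * w) = y := by
    rw [← mul_assoc, simple_mul_simple_comm cs h, hy]
    simp [mul_assoc]
  rw [this]
  omega

/-- A left descent of a fully commutative element can be moved to the front of any reduced word
by commutations. -/
theorem IsFCWord.exists_eq_append_of_isLeftDescent {l : List B} (hl : IsFCWord cs l) {p : B}
    (hp : cs.IsLeftDescent (cs.wordProd l) p) :
    ∃ a b, l = a ++ p :: b ∧ CommutesWith M p a := by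
  induction l with
  | nil => exact absurd hp (by simpa using cs.not_isLeftDescent_one p)
  | cons c l ih =>
    by_cases hpc : p = c
    · exact ⟨[], l, by simp [hpc], commutesWith_nil p⟩
    · have hc := isLeftDescent_cons hl.1
      have h2 := hl.2.eq_two_of_isLeftDescent hpc hp hc
      have hp' := isLeftDescent_simple_mul h2 hp hc
      rw [cs.wordProd_cons, cs.simple_mul_simple_cancel_left] at hp'
      obtain ⟨a, b, rfl, hab⟩ := ih hl.of_cons hp'
      exact ⟨c :: a, b, rfl, commutesWith_cons.mpr ⟨h2, hab⟩⟩

theorem IsFCWord.exists_eq_append_of_wordEquiv_cons {l l' : List B} (hl : IsFCWord cs l) {p : B}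
    (h : WordEquiv cs l (p :: l')) :
    ∃ a b, l = a ++ p :: b ∧ CommutesWith M p a ∧ WordEquiv cs (a ++ b) l' := by
  have hp := isLeftDescent_cons (h.isReduced hl.1)
  rw [← h.1] at hp
  obtain ⟨a, b, rfl, hab⟩ := hl.exists_eq_append_of_isLeftDescent hp
  exact ⟨a, b, rfl, hab, ((hab.wordEquiv cs b).symm.trans h).of_cons⟩

theorem IsFCWord.perm {l l' : List B} (hl : IsFCWord cs l) (h : WordEquiv cs l l') :
    l.Perm l' := by
  induction l' generalizing l with
  | nil =>
    have := h.2
    simp only [List.length_nil, List.length_eq_zero_iff] at this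
    rw [this]
  | cons p l' ih =>
    obtain ⟨a, b, rfl, hab, h'⟩ := hl.exists_eq_append_of_wordEquiv_cons h
    refine List.perm_middle.trans ((ih ?_ h').cons p)
    exact ((hab.wordEquiv cs b).isFCWord hl).of_cons

/-- The word `l` is equivalent to one that starts with the noncommuting generators `p`, `q`. -/
def StartsWith (cs : CoxeterSystem M W) (p q : B) (l : List B) : Prop :=
  Noncomm M p q ∧ ∃ b, WordEquiv cs l (p :: q :: b)

/-- The word `l` is equivalent to one that ends with the noncommuting generators `p`, `q`. -/
def EndsWith (cs : CoxeterSystem M W) (p q : B) (l : List B) : Prop :=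
  Noncomm M p q ∧ ∃ b, WordEquiv cs l (b ++ [p, q])

theorem StartsWith.congr {p q : B} {l l' : List B} (h : StartsWith cs p q l)
    (hl : WordEquiv cs l' l) : StartsWith cs p q l' :=
  ⟨h.1, h.2.imp fun _ hb => hl.trans hb⟩

theorem EndsWith.congr {p q : B} {l l' : List B} (h : EndsWith cs p q l)
    (hl : WordEquiv cs l' l) : EndsWith cs p q l' :=
  ⟨h.1, h.2.imp fun _ hb => hl.trans hb⟩

theorem StartsWith.append {p q : B} {l : List B} (h : StartsWith cs p q l) (l' : List B) :
    StartsWith cs p q (l ++ l') :=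
  ⟨h.1, h.2.elim fun b hb => ⟨b ++ l', by simpa using hb.append_right l'⟩⟩

theorem EndsWith.append {p q : B} {l : List B} (h : EndsWith cs p q l) (l' : List B) :
    EndsWith cs p q (l' ++ l) :=
  ⟨h.1, h.2.elim fun b hb => ⟨l' ++ b, by simpa using hb.append_left l'⟩⟩

theorem StartsWith.reverse {p q : B} {l : List B} (h : StartsWith cs p q l) :
    EndsWith cs q p l.reverse :=
  ⟨noncomm_comm.mp h.1, h.2.elim fun b hb => ⟨b.reverse, by simpa using hb.reverse⟩⟩

theorem EndsWith.reverse {p q : B} {l : List B} (h : EndsWith cs p q l) :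
    StartsWith cs q p l.reverse :=
  ⟨noncomm_comm.mp h.1, h.2.elim fun b hb => ⟨b.reverse, by simpa using hb.reverse⟩⟩

theorem startsWith_of_commutesWith {p q : B} (hpq : Noncomm M p q) {a d : List B}
    (hp : CommutesWith M p a) (hqa : CommutesWith M q a) (hqd : CommutesWith M q d) (e : List B) :
    StartsWith cs p q (a ++ p :: d ++ q :: e) := by
  refine ⟨hpq, a ++ d ++ e, ?_⟩
  have h₁ := hp.wordEquiv cs (d ++ q :: e)
  have h₂ := ((commutesWith_append.mpr ⟨hqa, hqd⟩).wordEquiv cs e).cons p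
  simp only [List.append_assoc, List.cons_append] at *
  exact h₁.trans h₂

theorem StartsWith.exists_eq_append {p q : B} {l : List B} (h : StartsWith cs p q l)
    (hl : IsFCWord cs l) :
    ∃ a d e, l = a ++ p :: d ++ q :: e ∧ CommutesWith M p a ∧ CommutesWith M q a ∧
      CommutesWith M q d := by
  obtain ⟨hpq, b, hb⟩ := h
  obtain ⟨a, b', rfl, hpa, h'⟩ := hl.exists_eq_append_of_wordEquiv_cons hb
  have hl' : IsFCWord cs (a ++ b') := ((hpa.wordEquiv cs b').isFCWord hl).of_cons
  obtain ⟨a', e, heq, hqa, -⟩ := hl'.exists_eq_append_of_wordEquiv_cons h'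
  have hq : q ∉ a := fun hq => hpq.ne_two (hpa q hq)
  rcases List.append_eq_append_iff.mp heq with ⟨d, rfl, rfl⟩ | ⟨d, rfl, hd⟩
  · rw [commutesWith_append] at hqa
    exact ⟨a, d, e, by simp, hpa, hqa.1, hqa.2⟩
  · cases d with
    | nil =>
      simp only [List.nil_append] at hd
      exact ⟨a', [], e, by simp [← hd], by simpa using hpa, hqa, commutesWith_nil q⟩
    | cons c d =>
      simp only [List.cons_append, List.cons.injEq] at hd
      exact absurd (by simp [hd.1]) hq

theorem endsWith_of_commutesWith {p q : B} (hpq : Noncomm M p q) {a d : List B}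
    (hq : CommutesWith M q a) (hpa : CommutesWith M p a) (hpd : CommutesWith M p d) (e : List B) :
    EndsWith cs p q (e ++ p :: d ++ q :: a) := by
  have := (startsWith_of_commutesWith (cs := cs) (noncomm_comm.mp hpq)
    (commutesWith_reverse.mpr hq) (commutesWith_reverse.mpr hpa)
    (commutesWith_reverse.mpr hpd) e.reverse).reverse
  simpa using this

theorem EndsWith.exists_eq_append {p q : B} {l : List B} (h : EndsWith cs p q l)
    (hl : IsFCWord cs l) :
    ∃ e d a, l = e ++ p :: d ++ q :: a ∧ CommutesWith M q a ∧ CommutesWith M p a ∧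
      CommutesWith M p d := by
  obtain ⟨a, d, e, heq, h₁, h₂, h₃⟩ := h.reverse.exists_eq_append hl.reverse
  refine ⟨e.reverse, d.reverse, a.reverse, ?_, commutesWith_reverse.mpr h₁,
    commutesWith_reverse.mpr h₂, commutesWith_reverse.mpr h₃⟩
  rw [← List.reverse_reverse l, heq]
  simp

/-- A fully commutative element of a Coxeter group with Property F is a product of commuting
generators, or a left or right star reduction applies to it. -/
theorem IsFCWord.trichotomy (hF : PropertyF cs) {l : List B} (hl : IsFCWord cs l) :
    (l.Nodup ∧ ∀ u ∈ l, ∀ v ∈ l, u ≠ v → M u v = 2) ∨ (∃ p q, StartsWith cs p q l) ∨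
      ∃ p q, EndsWith cs p q l := by
  have left : ∀ {l : List B} {p q : B}, cs.IsReduced l → Noncomm M p q →
      cs.IsLeftDescent (cs.wordProd l) p →
      cs.IsLeftDescent (cs.simple p * cs.wordProd l) q → StartsWith cs p q l := by
    intro l p q hl hpq hp hq
    obtain ⟨b, hb, hprod⟩ := cs.exists_isReduced (cs.simple q * (cs.simple p * cs.wordProd l))
    refine ⟨hpq, b, ?_, ?_⟩
    · rw [cs.wordProd_cons, cs.wordProd_cons, ← hprod]; simp
    · have h₁ := cs.isLeftDescent_iff.mp hp
      have h₂ := cs.isLeftDescent_iff.mp hq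
      rw [hprod, hb.eq] at h₂
      rw [hl.eq] at h₁
      simp only [List.length_cons]
      omega
  have right : ∀ {l : List B} {p q : B}, cs.IsReduced l → Noncomm M p q →
      cs.IsRightDescent (cs.wordProd l) p →
      cs.IsRightDescent (cs.wordProd l * cs.simple p) q → EndsWith cs q p l := by
    intro l p q hl hpq hp hq
    have := (left hl.reverse hpq (by rwa [cs.wordProd_reverse, cs.isLeftDescent_inv_iff]) (by
      rw [← cs.isRightDescent_inv_iff, cs.wordProd_reverse]
      simpa using hq)).reverse
    simpa using this
  obtain ⟨x, hx, hcomm⟩ := hF _ hl.2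
  rcases Relation.ReflTransGen.cases_head hx with rfl | ⟨y, ⟨s, t, h | h⟩, -⟩
  · obtain ⟨l', hnd, hcom, hred, hprod⟩ := hcomm
    have hperm := hl.perm ⟨hprod, by rw [← hl.1.eq, hprod, hred.eq]⟩
    exact Or.inl ⟨hperm.nodup_iff.mpr hnd,
      fun u hu v hv => hcom u (hperm.mem_iff.mp hu) v (hperm.mem_iff.mp hv)⟩
  · obtain ⟨hst, ⟨h₁, -, rfl, h₂⟩ | ⟨h₁, -, rfl, h₂⟩⟩ := h
    · exact Or.inr (Or.inl ⟨s, t, left hl.1 hst h₁ h₂⟩)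
    · exact Or.inr (Or.inl ⟨t, s, left hl.1 (noncomm_comm.mp hst) h₁ h₂⟩)
  · obtain ⟨hst, ⟨h₁, -, rfl, h₂⟩ | ⟨h₁, -, rfl, h₂⟩⟩ := h
    · exact Or.inr (Or.inr ⟨t, s, right hl.1 hst h₁ h₂⟩)
    · exact Or.inr (Or.inr ⟨s, t, right hl.1 (noncomm_comm.mp hst) h₁ h₂⟩)

end FullyCommutative

section ComplexProducts

variable {cs}

theorem exists_wordEquiv_cons {l : List B} (hl : cs.IsReduced l) {p : B}
    (hp : cs.IsLeftDescent (cs.wordProd l) p) : ∃ l', WordEquiv cs l (p :: l') := by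
  obtain ⟨l', hl', hprod⟩ := cs.exists_isReduced (cs.simple p * cs.wordProd l)
  refine ⟨l', ?_, ?_⟩
  · rw [cs.wordProd_cons, ← hprod, cs.simple_mul_simple_cancel_left]
  · rw [cs.isLeftDescent_iff, hprod, hl'.eq, hl.eq] at hp
    rw [List.length_cons, hp]

theorem altList_eq_cons {s t : B} {k : ℕ} (hk : 0 < k) :
    altList s t k = s :: altList t s (k - 1) := by
  obtain ⟨k, rfl⟩ := Nat.exists_eq_succ_of_ne_zero hk.ne'
  rfl

theorem wordEquiv_altList_comm (s t : B) :
    WordEquiv cs (altList s t (M s t)) (altList t s (M t s)) :=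
  ⟨by rw [wordProd_altList_eq_longest, wordProd_altList_eq_longest, longest_comm],
    by rw [length_altList, length_altList, M.symmetric]⟩

theorem not_isFCWord_altList {p q : B} (hpq : 3 ≤ M p q) (a b : List B) :
    ¬ IsFCWord cs (a ++ altList p q (M p q) ++ b) := by
  intro h
  have hK := h.append_left.append_right
  refine hK.2 ⟨p, q, hpq, 1, 1, ?_, ?_⟩
  · rw [wordProd_altList_eq_longest, one_mul, mul_one]
  · rw [wordProd_altList_eq_longest, cs.length_one, zero_add, add_zero]

theorem isComplex_iff_exists_wordEquiv {l : List B} (hl : cs.IsReduced l) :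
    IsComplex cs (cs.wordProd l) ↔ ∃ p q a b, 3 ≤ M p q ∧
      WordEquiv cs l (a ++ altList p q (M p q) ++ b) := by
  constructor
  · rintro ⟨p, q, hpq, x₁, x₂, hx, hlen⟩
    have hne : p ≠ q := by rintro rfl; rw [M.diagonal] at hpq; omega
    obtain ⟨a, ha, rfl⟩ := cs.exists_isReduced x₁
    obtain ⟨b, hb, rfl⟩ := cs.exists_isReduced x₂
    refine ⟨p, q, a, b, hpq, ?_, ?_⟩
    · rw [hx, cs.wordProd_append, cs.wordProd_append, wordProd_altList_eq_longest]
    · rw [hl.eq, ha.eq, hb.eq, length_longest cs hne (by omega)] at hlen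
      rw [hlen, List.length_append, List.length_append, length_altList]
  · rintro ⟨p, q, a, b, hpq, h⟩
    by_contra hc
    exact not_isFCWord_altList hpq a b (h.isFCWord ⟨hl, hc⟩)

theorem CommutesWith.isLeftDescent_of_append {s : B} {a b : List B} (h : CommutesWith M s a)
    (hred : cs.IsReduced (a ++ b)) (hs : cs.IsLeftDescent (cs.wordProd (a ++ b)) s) :
    cs.IsLeftDescent (cs.wordProd b) s := by
  induction a with
  | nil => exact hs
  | cons c a ih =>
    rw [commutesWith_cons] at h
    have := isLeftDescent_simple_mul h.1 hs (isLeftDescent_cons hred)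
    rw [List.cons_append, cs.wordProd_cons, cs.simple_mul_simple_cancel_left] at this
    exact ih h.2 (isReduced_append_right (a := [c]) hred) this

theorem exists_wordEquiv_altList_of_isLeftDescent {s c : B} {l : List B}
    (hred : cs.IsReduced (s :: l)) (hc : cs.IsLeftDescent (cs.wordProd (s :: l)) c)
    (hsc : s ≠ c) (h2 : M s c ≠ 2) :
    3 ≤ M s c ∧ ∃ b, WordEquiv cs l (altList c s (M s c - 1) ++ b) := by
  obtain ⟨h0, y, hy, hlen⟩ := eq_longest_mul_of_isLeftDescent cs hsc (isLeftDescent_cons hred) hc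
  have h1 := M.off_diagonal s c hsc
  obtain ⟨b, hb, rfl⟩ := cs.exists_isReduced y
  refine ⟨by omega, b, WordEquiv.of_cons (c := s) ⟨?_, ?_⟩⟩
  · rw [hy, altList_eq_cons (by omega), ← List.cons_append, cs.wordProd_append]
  · rw [hred.eq, hb.eq] at hlen
    rw [hlen, ← List.cons_append, ← altList_eq_cons (by omega), List.length_append, length_altList]

/-- If multiplying a fully commutative element by `s` on the left gives a longer complex element,
then the new braid involves `s`, up to letters commuting with `s`. -/
theorem exists_wordEquiv_altList_of_isComplex {s : B} {l : List B} (hl : IsFCWord cs l)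
    (hred : cs.IsReduced (s :: l)) (hc : IsComplex cs (cs.wordProd (s :: l))) :
    ∃ a t b, 3 ≤ M s t ∧ CommutesWith M s a ∧
      WordEquiv cs l (a ++ altList t s (M s t - 1) ++ b) := by
  obtain ⟨p, q, a, b, hpq, h⟩ := (isComplex_iff_exists_wordEquiv hred).mp hc
  clear hc
  have of_descent : ∀ {l : List B} {c : B}, cs.IsReduced (s :: l) →
      cs.IsLeftDescent (cs.wordProd (s :: l)) c → s ≠ c → M s c ≠ 2 →
      ∃ a t b, 3 ≤ M s t ∧ CommutesWith M s a ∧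
        WordEquiv cs l (a ++ altList t s (M s t - 1) ++ b) := by
    intro l c h₁ h₂ h₃ h₄
    obtain ⟨h3, b, hb⟩ := exists_wordEquiv_altList_of_isLeftDescent h₁ h₂ h₃ h₄
    exact ⟨[], c, b, h3, commutesWith_nil s, hb⟩
  induction a generalizing l with
  | nil =>
    have hne : p ≠ q := by rintro rfl; rw [M.diagonal] at hpq; omega
    rw [List.nil_append] at h
    have hr := h.isReduced hred
    have hp : cs.IsLeftDescent (cs.wordProd (s :: l)) p := by
      rw [h.1]
      rw [altList_eq_cons (by omega)] at hr ⊢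
      exact isLeftDescent_cons hr
    have h' := h.trans ((wordEquiv_altList_comm p q).append_right b)
    have hr' := h'.isReduced hred
    have hq : cs.IsLeftDescent (cs.wordProd (s :: l)) q := by
      rw [h'.1]
      rw [altList_eq_cons (by rw [M.symmetric]; omega)] at hr' ⊢
      exact isLeftDescent_cons hr'
    by_cases hsp : s = p
    · subst hsp
      exact of_descent hred hq hne (by omega)
    by_cases hsq : s = q
    · subst hsq
      exact of_descent hred hp hne.symm (by rw [M.symmetric]; omega)
    by_cases hp2 : M s p = 2
    · by_cases hq2 : M s q = 2
      · exfalso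
        have hK : CommutesWith M s (altList p q (M p q)) := fun c hc => by
          rcases mem_altList hc with rfl | rfl <;> assumption
        have hs := isLeftDescent_cons hred
        rw [h.1] at hs
        obtain ⟨b', hb'⟩ := exists_wordEquiv_cons (isReduced_append_right hr)
          (hK.isLeftDescent_of_append hr hs)
        have := (h.trans ((hb'.append_left _).trans (hK.wordEquiv cs b'))).of_cons
        exact not_isFCWord_altList hpq [] b' (this.isFCWord hl)
      · exact of_descent hred hq hsq hq2
    · exact of_descent hred hp hsp hp2
  | cons c a ih =>
    have hr := h.isReduced hred
    have hcd : cs.IsLeftDescent (cs.wordProd (s :: l)) c := by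
      rw [h.1]
      exact isLeftDescent_cons hr
    by_cases hsc : s = c
    · subst hsc
      exact absurd (h.of_cons.isFCWord hl) (not_isFCWord_altList hpq a b)
    by_cases h2 : M s c = 2
    · have hs := isLeftDescent_simple_mul h2 (isLeftDescent_cons hred) hcd
      rw [h.1, List.cons_append, List.cons_append, cs.wordProd_cons,
        cs.simple_mul_simple_cancel_left] at hs
      obtain ⟨l', hl'⟩ := exists_wordEquiv_cons (isReduced_append_right (a := [c]) hr) hs
      have hcs : CommutesWith M s [c] := commutesWith_cons.mpr ⟨h2, commutesWith_nil s⟩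
      have hll' : WordEquiv cs l (c :: l') :=
        (h.trans ((hl'.cons c).trans (hcs.wordEquiv cs l'))).of_cons
      obtain ⟨a', t, b', h3, ha', he⟩ := ih (hll'.isFCWord hl).of_cons
        (hl'.isReduced (isReduced_append_right (a := [c]) hr)) hl'.symm
      exact ⟨c :: a', t, b', h3, commutesWith_cons.mpr ⟨h2, ha'⟩, hll'.trans (he.cons c)⟩
    · exact of_descent hred hcd hsc h2

end ComplexProducts

section PropertyF

variable {cs}

/-- The letter `q` commutes with every other letter of a word whose letters are distinct and
commute pairwise. -/
theorem commutesWith_of_pairwise {q : B} {a b : List B} (hnd : (a ++ q :: b).Nodup)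
    (hcom : ∀ u ∈ a ++ q :: b, ∀ v ∈ a ++ q :: b, u ≠ v → M u v = 2) :
    CommutesWith M q (a ++ b) := by
  intro c hc
  have hq : q ∉ a ++ b := (List.nodup_cons.mp (List.perm_middle.nodup_iff.mp hnd)).1
  refine hcom q (by simp) c ?_ (fun h => hq (h ▸ hc))
  rw [List.mem_append] at hc
  simp only [List.mem_append, List.mem_cons]
  tauto

/-- If a fully commutative word `s ⋯ u`, in which `s` commutes with everything but the last letter,
has no left star reduction, then there is a right star reduction not involving the first letter. -/
theorem exists_endsWith_of_forall_not_startsWith (hF : PropertyF cs) {s u : B} {a : List B}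
    (hl : IsFCWord cs (s :: a ++ [u])) (hsa : CommutesWith M s a) (hsu : Noncomm M s u)
    (hno : ∀ p q, ¬ StartsWith cs p q (s :: a ++ [u])) :
    ∃ p q, EndsWith cs p q (a ++ [u]) := by
  induction hn : a.length using Nat.strong_induction_on generalizing s u a with
  | _ n ih =>
  have hnoa : ∀ p q, ¬ StartsWith cs p q a := fun p q h =>
    hno p q ((h.append [s, u]).congr (hsa.wordEquiv cs [u]).symm)
  rcases (IsFCWord.of_cons hl).trichotomy hF with ⟨hnd, hcom⟩ | ⟨p, q, h⟩ | h
  · exact absurd (startsWith_of_commutesWith hsu (commutesWith_nil s) (commutesWith_nil u)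
      (by simpa using commutesWith_of_pairwise hnd hcom) []) (hno s u)
  · obtain ⟨c, d, e, heq, hpc, hqc, hqd⟩ := h.exists_eq_append (IsFCWord.of_cons hl)
    rcases e.eq_nil_or_concat with rfl | ⟨e, z, rfl⟩
    · obtain ⟨rfl, huq⟩ := List.append_inj' heq rfl
      obtain rfl : u = q := by simpa using huq
      have hpu := h.1
      have hla : IsFCWord cs (c ++ p :: d) := (IsFCWord.of_cons hl).append_left
      rcases hla.trichotomy hF with ⟨hnd, hcom⟩ | ⟨y, z, h'⟩ | ⟨z, z', h'⟩
      · exact ⟨p, u, endsWith_of_commutesWith hpu (commutesWith_nil u) (commutesWith_nil p)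
          (commutesWith_append.mp (commutesWith_of_pairwise hnd hcom)).2 c⟩
      · exact absurd h' (hnoa y z)
      · obtain ⟨e₁, d₁, a₁, heq₁, hz'a, hza, hzd⟩ := h'.exists_eq_append hla
        have hcomm : ∀ y ∈ c ++ p :: d, y ≠ p → M u y = 2 := by
          intro y hy hyp
          simp only [List.mem_append, List.mem_cons] at hy
          rcases hy with hy | hy | hy
          exacts [hqc y hy, absurd hy hyp, hqd y hy]
        by_cases hz'p : z' = p
        · subst hz'p
          rw [heq₁]
          have := endsWith_of_commutesWith (cs := cs) hpu (commutesWith_nil u)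
            (commutesWith_nil z') hz'a (e₁ ++ z :: d₁)
          exact ⟨z', u, by simpa using this⟩
        by_cases hzp : z = p
        · subst hzp
          have hzd' : z ∉ d := fun hz => by
            have := hqd z hz
            rw [M.symmetric] at this
            exact hpu.ne_two this
          rw [List.append_assoc, List.cons_append,
            List.append_cons_inj_of_notMem hpc.notMem hzd'] at heq₁
          obtain ⟨rfl, -, rfl⟩ := heq₁
          have hde : WordEquiv cs (c ++ (d₁ ++ z' :: a₁)) (c ++ d₁ ++ a₁ ++ [z']) := by
            have := (hz'a.wordEquiv cs []).symm.append_left (c ++ d₁)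
            simpa using this
          have hequiv : WordEquiv cs (c ++ z :: (d₁ ++ z' :: a₁))
              (z :: (c ++ d₁ ++ a₁) ++ [z']) :=
            (hpc.wordEquiv cs _).trans (hde.cons z)
          obtain ⟨y, y', hy⟩ := ih _ (by rw [← hn]; simp) (hequiv.isFCWord hla)
            (commutesWith_append.mpr ⟨commutesWith_append.mpr ⟨hpc, hzd⟩, hza⟩) h'.1
            (fun y y' h => hnoa y y' (h.congr hequiv)) rfl
          refine ⟨y, y', ((hy.congr hde).append [z, u]).congr ?_⟩
          have h₁ := hpc.wordEquiv cs (d₁ ++ z' :: a₁ ++ [u])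
          have h₂ := ((commutesWith_append.mpr ⟨hqc, hqd⟩).wordEquiv cs []).cons z
          simp only [List.append_assoc, List.cons_append, List.append_nil,
            List.nil_append] at h₁ h₂ ⊢
          exact h₁.trans h₂
        · have hz2 := hcomm z (by simp [heq₁]) hzp
          have hz'2 := hcomm z' (by simp [heq₁]) hz'p
          rw [M.symmetric] at hz2 hz'2
          rw [heq₁]
          have := endsWith_of_commutesWith (cs := cs) h'.1 (a := a₁ ++ [u])
            (commutesWith_append.mpr ⟨hz'a, commutesWith_cons.mpr ⟨hz'2, commutesWith_nil _⟩⟩)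
            (commutesWith_append.mpr ⟨hza, commutesWith_cons.mpr ⟨hz2, commutesWith_nil _⟩⟩) hzd e₁
          exact ⟨z, z', by simpa using this⟩
    · have : a = c ++ p :: d ++ q :: e :=
        (List.append_inj' (t₁ := [u]) (t₂ := [z]) (by simpa using heq) rfl).1
      rw [this] at hnoa
      exact absurd (startsWith_of_commutesWith h.1 hpc hqc hqd e) (hnoa p q)
  · exact h

end PropertyF

section Classification

variable {cs}

theorem StartsWith.exists_cosetDecompL {p q : B} {l : List B} (h : StartsWith cs p q l)
    (hl : cs.IsReduced l) :
    ∃ wI wII, CosetDecompL cs p q (cs.wordProd l) wI wII ∧ 1 < cs.length wI := by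
  obtain ⟨-, b, hb⟩ := h
  rw [hb.1]
  exact exists_cosetDecompL_one_lt cs (hb.isReduced hl)

theorem EndsWith.exists_cosetDecompR {p q : B} {l : List B} (h : EndsWith cs p q l)
    (hl : cs.IsReduced l) :
    ∃ wII wI, CosetDecompR cs p q (cs.wordProd l) wII wI ∧ 1 < cs.length wI := by
  obtain ⟨-, b, hb⟩ := h
  rw [hb.1]
  exact exists_cosetDecompR_one_lt cs (hb.isReduced hl)

theorem ne_of_eq_two {s t : B} (h : M s t = 2) : s ≠ t := by
  rintro rfl
  rw [M.diagonal] at h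
  omega

theorem wordEquiv_append_comm (cs : CoxeterSystem M W) {a k : List B}
    (h : ∀ c ∈ k, CommutesWith M c a) (b : List B) :
    WordEquiv cs (a ++ k ++ b) (k ++ (a ++ b)) := by
  induction k with
  | nil => simpa using WordEquiv.refl (cs := cs) (a ++ b)
  | cons c k ih =>
    have h₁ := (h c (by simp)).wordEquiv cs (k ++ b)
    have h₂ := (ih fun d hd => h d (by simp [hd])).cons c
    simp only [List.append_assoc, List.cons_append] at *
    exact h₁.trans h₂

/-- The possible positions of the letters of a left star reduction relative to a braid. -/
theorem StartsWith.position_of_braid {s t p q : B} {a r b : List B}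
    (h : StartsWith cs p q (a ++ t :: s :: r ++ b)) (hl : IsFCWord cs (a ++ t :: s :: r ++ b))
    (hsa : CommutesWith M s a) (hst : M s t ≠ 2) :
    CommutesWith M t a ∨ (M s p = 2 ∧ M s q = 2) ∨
      (t = q ∧ M s p = 2 ∧ ∃ a' d, a = a' ++ p :: d ∧ CommutesWith M p a' ∧
        CommutesWith M t a' ∧ CommutesWith M t d) := by
  obtain ⟨a', d, e, heq, hpa, hqa, hqd⟩ := h.exists_eq_append hl
  have hpq := h.1
  simp only [List.append_assoc, List.cons_append] at heq
  rcases List.append_eq_append_iff.mp heq with ⟨f, rfl, hf⟩ | ⟨f, rfl, hf⟩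
  · rcases f with _ | ⟨_, _ | ⟨_, f⟩⟩
    · simp only [List.nil_append, List.cons.injEq] at hf
      obtain ⟨rfl, -⟩ := hf
      exact Or.inl (by simpa using hpa)
    · simp only [List.cons_append, List.nil_append, List.cons.injEq] at hf
      obtain ⟨rfl, rfl, -⟩ := hf
      exact absurd (hpa t (by simp)) hst
    · simp only [List.cons_append, List.cons.injEq] at hf
      obtain ⟨rfl, rfl, -⟩ := hf
      have h₁ := hpa s (by simp)
      have h₂ := hqa s (by simp)
      rw [M.symmetric] at h₁ h₂
      exact Or.inr (Or.inl ⟨h₁, h₂⟩)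
  · rcases f with _ | ⟨_, f⟩
    · simp only [List.nil_append, List.cons.injEq] at hf
      obtain ⟨rfl, -⟩ := hf
      exact Or.inl (by simpa using hpa)
    · simp only [List.cons_append, List.cons.injEq] at hf
      obtain ⟨rfl, hf⟩ := hf
      have hsp : M s p = 2 := hsa p (by simp)
      rcases List.append_eq_append_iff.mp hf with ⟨g, rfl, hg⟩ | ⟨g, rfl, hg⟩
      · rcases g with _ | ⟨_, g⟩
        · simp only [List.nil_append, List.cons.injEq] at hg
          obtain ⟨rfl, -⟩ := hg
          exact Or.inr (Or.inr ⟨rfl, hsp, a', d, by simp, hpa, hqa, hqd⟩)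
        · simp only [List.cons_append, List.cons.injEq] at hg
          obtain ⟨rfl, -⟩ := hg
          exact Or.inr (Or.inl ⟨hsp, hsa q (by simp)⟩)
      · rcases g with _ | ⟨_, _ | ⟨_, g⟩⟩
        · simp only [List.nil_append, List.cons.injEq] at hg
          obtain ⟨rfl, -⟩ := hg
          exact Or.inr (Or.inr ⟨rfl, hsp, a', f, rfl, hpa, hqa, by simpa using hqd⟩)
        · simp only [List.cons_append, List.nil_append, List.cons.injEq] at hg
          obtain ⟨rfl, rfl, -⟩ := hg
          rw [M.symmetric] at hsp
          exact absurd hsp hpq.ne_two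
        · simp only [List.cons_append, List.cons.injEq] at hg
          obtain ⟨rfl, rfl, -⟩ := hg
          have h₁ := hqd s (by simp)
          rw [M.symmetric] at h₁
          exact Or.inr (Or.inl ⟨hsp, h₁⟩)

/-- If `p` is a left descent of the fully commutative element obtained from `p t s t s ⋯` by
removing the first two letters, then `m(s,t) = 3` and the word is equivalent to `p t s p ⋯`. -/
theorem exists_wordEquiv_of_isLeftDescent_braid {s t p : B} {c : List B} (hst : 3 ≤ M s t)
    (hsp : M s p = 2) (hpt : Noncomm M p t)
    (hl : IsFCWord cs (altList s t (M s t - 2) ++ c))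
    (hd : cs.IsLeftDescent (cs.wordProd (altList s t (M s t - 2) ++ c)) p) :
    M s t = 3 ∧ ∃ c', WordEquiv cs c (p :: c') := by
  obtain ⟨a, b, heq, hpa⟩ := hl.exists_eq_append_of_isLeftDescent hd
  rw [altList_eq_cons (by omega), List.cons_append] at heq
  rcases a with _ | ⟨_, a⟩
  · simp only [List.nil_append, List.cons.injEq] at heq
    obtain ⟨rfl, -⟩ := heq
    rw [M.diagonal] at hsp
    omega
  simp only [List.cons_append, List.cons.injEq] at heq
  obtain ⟨rfl, heq⟩ := heq
  rw [commutesWith_cons] at hpa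
  by_cases h3 : M s t = 3
  · rw [h3] at heq
    change c = a ++ p :: b at heq
    exact ⟨h3, a ++ b, heq ▸ hpa.2.wordEquiv cs b⟩
  · exfalso
    rw [altList_eq_cons (by omega), List.cons_append] at heq
    rcases a with _ | ⟨_, a⟩
    · simp only [List.nil_append, List.cons.injEq] at heq
      exact hpt.ne heq.1.symm
    · simp only [List.cons_append, List.cons.injEq] at heq
      obtain ⟨rfl, -⟩ := heq
      exact hpt.ne_two (hpa.2 t (by simp))

end Classification

/-- Lemma 6.9: suppose `W` has Property F, `w ∈ W_c`, `s ∈ S` with `ℓ(sw) > ℓ(w)`, and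
set `x = sw`.  Then at least one of the alternatives (i)–(vii) holds. -/
theorem statement6 (hF : PropertyF cs) (w : W) (hw : FullyComm cs w) (s : B)
    (hlen : cs.length w < cs.length (cs.simple s * w)) :
    -- (i) `x` is a reduced product of distinct pairwise commuting generators
    IsCommProd cs (cs.simple s * w) ∨
    -- (ii) `x ∈ W_c` and there is `t` with `m(s,t) ≥ 3` such that in `x = x_I·x^I`
    -- with respect to `I = {s,t}` one has `ℓ(x_I) > 1`
    (FullyComm cs (cs.simple s * w) ∧ ∃ t : B, Noncomm M s t ∧ ∃ xI xII : W,
      CosetDecompL cs s t (cs.simple s * w) xI xII ∧ 1 < cs.length xI) ∨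
    -- (iii) `x` is weakly complex with a reduced factorization beginning with `w_{st}`
    (IsWeaklyComplex cs (cs.simple s * w) ∧ ∃ t : B, 3 ≤ M s t ∧ ∃ x' : W,
      cs.simple s * w = longest cs s t * x' ∧
      cs.length (cs.simple s * w) = cs.length (longest cs s t : W) + cs.length x') ∨
    -- (iv) there are `u, u'` with `m(u,u') ≥ 3`, `s ∉ {u,u'}`, `su = us`, `su' = u's`
    -- such that in `w = w_I·w^I` with respect to `I = {u,u'}` one has `ℓ(w_I) > 1`
    (∃ u u' : B, Noncomm M u u' ∧ s ≠ u ∧ s ≠ u' ∧ M s u = 2 ∧ M s u' = 2 ∧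
      ∃ wI wII : W, CosetDecompL cs u u' w wI wII ∧ 1 < cs.length wI) ∨
    -- (v) there are `u, u'` with `m(u,u') ≥ 3` such that in the right coset
    -- decomposition `w = (^I w)·(_I w)` with respect to `I = {u,u'}` one has `ℓ(_I w) > 1`
    (∃ u u' : B, Noncomm M u u' ∧ ∃ wII wI : W,
      CosetDecompR cs u u' w wII wI ∧ 1 < cs.length wI) ∨
    -- (vi) `x` is weakly complex and there are `t, u` with `3 ≤ m(s,t) < ∞`,
    -- `m(u,t) ≥ 3`, `su = us` such that `w = u·(tsts⋯)·x'` reduced, the alternating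
    -- product having `m(s,t) − 1` factors, and `ℓ(u·(tuw)) > ℓ(tuw)`
    (IsWeaklyComplex cs (cs.simple s * w) ∧ ∃ t u : B, 3 ≤ M s t ∧ Noncomm M u t ∧
      M s u = 2 ∧ ∃ x' : W,
      w = cs.simple u * altProd cs t s (M s t - 1) * x' ∧
      cs.length w = 1 + cs.length (altProd cs t s (M s t - 1) : W) + cs.length x' ∧
      cs.length (cs.simple t * cs.simple u * w) <
        cs.length (cs.simple u * (cs.simple t * cs.simple u * w))) ∨
    -- (vii) `x` is weakly complex and there are `t, u` with `m(s,t) = 3`, `m(u,t) ≥ 3`,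
    -- `su = us` such that `w = u·t·s·u·x'` reduced
    (IsWeaklyComplex cs (cs.simple s * w) ∧ ∃ t u : B, M s t = 3 ∧ Noncomm M u t ∧
      M s u = 2 ∧ ∃ x' : W,
      w = cs.simple u * cs.simple t * cs.simple s * cs.simple u * x' ∧
      cs.length w = 4 + cs.length x') := by
  obtain ⟨l, hl, rfl⟩ := cs.exists_isReduced w
  have hfc : IsFCWord cs l := ⟨hl, hw⟩
  have hred : cs.IsReduced (s :: l) := by
    have := cs.length_simple_mul (cs.wordProd l) s
    unfold CoxeterSystem.IsReduced
    rw [cs.wordProd_cons, List.length_cons, ← hl.eq]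
    omega
  rw [← cs.wordProd_cons] at *
  by_cases hx : FullyComm cs (cs.wordProd (s :: l))
  · have hfcx : IsFCWord cs (s :: l) := ⟨hred, hx⟩
    by_cases hstart : ∃ p q, StartsWith cs p q (s :: l)
    · obtain ⟨p, q, h⟩ := hstart
      obtain ⟨a, d, e, heq, hpa, hqa, hqd⟩ := h.exists_eq_append hfcx
      rcases a with _ | ⟨_, a⟩
      · simp only [List.nil_append, List.cons_append, List.cons.injEq] at heq
        obtain ⟨rfl, -⟩ := heq
        exact Or.inr (Or.inl ⟨hx, q, h.1, h.exists_cosetDecompL hred⟩)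
      · simp only [List.cons_append, List.cons.injEq] at heq
        obtain ⟨rfl, rfl⟩ := heq
        rw [commutesWith_cons, M.symmetric] at hpa hqa
        have h' : StartsWith cs p q (a ++ p :: d ++ q :: e) :=
          startsWith_of_commutesWith h.1 hpa.2 hqa.2 hqd e
        exact Or.inr (Or.inr (Or.inr (Or.inl ⟨p, q, h.1, ne_of_eq_two hpa.1, ne_of_eq_two hqa.1,
          hpa.1, hqa.1, h'.exists_cosetDecompL hl⟩)))
    · rcases hfcx.trichotomy hF with ⟨hnd, hcom⟩ | h | ⟨p, q, h⟩
      · exact Or.inl ⟨s :: l, hnd, hcom, hred, rfl⟩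
      · exact absurd h hstart
      · have hend : ∃ p q, EndsWith cs p q l := by
          obtain ⟨e, d, a, heq, hqa, hpa, hpd⟩ := h.exists_eq_append hfcx
          rcases e with _ | ⟨_, e⟩
          · simp only [List.nil_append, List.cons_append, List.cons.injEq] at heq
            obtain ⟨rfl, rfl⟩ := heq
            have hequiv : WordEquiv cs (d ++ q :: a) (d ++ a ++ [q]) := by
              simpa using (hqa.wordEquiv cs []).symm.append_left d
            obtain ⟨y, z, hyz⟩ := exists_endsWith_of_forall_not_startsWith hF
              ((hequiv.cons s).isFCWord hfcx) (commutesWith_append.mpr ⟨hpd, hpa⟩) h.1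
              (fun y z h => hstart ⟨y, z, h.congr (hequiv.cons s)⟩)
            exact ⟨y, z, hyz.congr hequiv⟩
          · simp only [List.cons_append, List.cons.injEq] at heq
            obtain ⟨rfl, rfl⟩ := heq
            exact ⟨p, q, endsWith_of_commutesWith h.1 hqa hpa hpd e⟩
        obtain ⟨p, q, h⟩ := hend
        exact Or.inr (Or.inr (Or.inr (Or.inr (Or.inl ⟨p, q, h.1, h.exists_cosetDecompR hl⟩))))
  · have hc : IsComplex cs (cs.wordProd (s :: l)) := not_not.mp hx
    have hwc : IsWeaklyComplex cs (cs.wordProd (s :: l)) := by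
      refine ⟨hc, s, cs.wordProd l, hw, cs.wordProd_cons s l, ?_⟩
      rw [hred.eq, hl.eq, List.length_cons, add_comm]
    obtain ⟨a, t, b, hst, hsa, hequiv⟩ := exists_wordEquiv_altList_of_isComplex hfc hred hc
    have hne : s ≠ t := by rintro rfl; rw [M.diagonal] at hst; omega
    have hk : altList t s (M s t - 1) = t :: altList s t (M s t - 2) := altList_eq_cons (by omega)
    have hk' : altList t s (M s t - 1) = t :: s :: altList t s (M s t - 3) := by
      rw [hk, altList_eq_cons (by omega)]
      rfl
    have hfc' := hequiv.isFCWord hfc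
    rcases hfc'.trichotomy hF with ⟨-, hcom⟩ | ⟨p, q, h⟩ | ⟨p, q, h⟩
    · have := hcom s (by simp [hk']) t (by simp [hk']) hne
      omega
    · have hpos := StartsWith.position_of_braid (hk' ▸ h) (hk' ▸ hfc') hsa (by omega)
      rcases hpos with hta | ⟨hsp, hsq⟩ | ⟨rfl, hsp, a, d, rfl, hpa, hta, htd⟩
      · have hx' : WordEquiv cs (s :: l) (altList s t (M s t) ++ (a ++ b)) := by
          rw [altList_eq_cons (s := s) (by omega)]
          refine (hequiv.trans (wordEquiv_append_comm cs (fun c hc => ?_) b)).cons s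
          rcases mem_altList hc with rfl | rfl <;> assumption
        have hr := isReduced_append_right (hx'.isReduced hred)
        refine Or.inr (Or.inr (Or.inl ⟨hwc, t, hst, cs.wordProd (a ++ b), ?_, ?_⟩))
        · rw [hx'.1, cs.wordProd_append, wordProd_altList_eq_longest]
        · rw [length_longest cs hne (by omega), hr.eq, hred.eq, hx'.2, List.length_append,
            length_altList]
      · exact Or.inr (Or.inr (Or.inr (Or.inl ⟨p, q, h.1, ne_of_eq_two hsp, ne_of_eq_two hsq,
          hsp, hsq, (h.congr hequiv).exists_cosetDecompL hl⟩)))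
      · rw [commutesWith_append, commutesWith_cons] at hsa
        have hw' : WordEquiv cs l (p :: (altList t s (M s t - 1) ++ (a ++ d ++ b))) := by
          refine hequiv.trans ?_
          have h₁ := hpa.wordEquiv cs (d ++ altList t s (M s t - 1) ++ b)
          have h₂ := (wordEquiv_append_comm cs (a := a ++ d) (k := altList t s (M s t - 1))
            (fun c hc => ?_) b).cons p
          · simp only [List.append_assoc, List.cons_append] at *
            exact h₁.trans h₂
          · rcases mem_altList hc with rfl | rfl
            exacts [commutesWith_append.mpr ⟨hta, htd⟩, commutesWith_append.mpr ⟨hsa.1, hsa.2.2⟩]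
        have hfcw := hw'.isFCWord hfc
        have hrk := isReduced_append_left (isReduced_append_right (a := [p]) hfcw.1)
        have hrc := isReduced_append_right (isReduced_append_right (a := [p]) hfcw.1)
        have hcut : cs.simple t * cs.simple p * cs.wordProd l =
            cs.wordProd (altList s t (M s t - 2) ++ (a ++ d ++ b)) := by
          rw [hw'.1, hk, cs.wordProd_cons, List.cons_append, cs.wordProd_cons]
          simp [mul_assoc]
        by_cases hd : cs.IsLeftDescent (cs.simple t * cs.simple p * cs.wordProd l) p
        · have hfcc : IsFCWord cs (altList s t (M s t - 2) ++ (a ++ d ++ b)) := by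
            rw [hk] at hfcw
            exact hfcw.of_cons.of_cons
          obtain ⟨h3, c, hcc⟩ := exists_wordEquiv_of_isLeftDescent_braid hst hsp h.1 hfcc
            (hcut ▸ hd)
          have hw'' : WordEquiv cs l ([p, t, s, p] ++ c) := by
            refine hw'.trans ?_
            rw [h3]
            exact hcc.append_left [p, t, s]
          have hrc' := isReduced_append_right (hw''.isReduced hl)
          refine Or.inr (Or.inr (Or.inr (Or.inr (Or.inr (Or.inr
            ⟨hwc, t, p, h3, h.1, hsp, cs.wordProd c, ?_, ?_⟩)))))
          · rw [hw''.1]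
            simp [cs.wordProd_cons, mul_assoc]
          · rw [hl.eq, hw''.2, hrc'.eq, List.length_append]
            rfl
        · refine Or.inr (Or.inr (Or.inr (Or.inr (Or.inr (Or.inl
            ⟨hwc, t, p, hst, h.1, hsp, cs.wordProd (a ++ d ++ b), ?_, ?_, ?_⟩)))))
          · rw [hw'.1, altProd_eq_wordProd_altList, cs.wordProd_cons, cs.wordProd_append, mul_assoc]
          · rw [altProd_eq_wordProd_altList, hrk.eq, hrc.eq, hl.eq, hw'.2, List.length_cons,
              List.length_append]
            ring
          · have := cs.not_isLeftDescent_iff.mp hd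
            omega
    · exact Or.inr (Or.inr (Or.inr (Or.inr (Or.inl
        ⟨p, q, h.1, (h.congr hequiv).exists_cosetDecompR hl⟩))))
end

section
/- Let (W, S) be an arbitrary Coxeter system and let w ∈ W_c be fully commutative. If w is left star reducible or right star reducible to x ∈ W_c, then n(x) = n(w). -/
open CoxeterSystem

variable {B W : Type*} [Group W] {M : CoxeterMatrix B} (cs : CoxeterSystem M W)

namespace CoxeterSystem

open Polynomial

/-- The coroot functional `e_t ↦ -2 cos (π / M s t)` of the geometric representation. -/
noncomputable def geomCoroot (M : CoxeterMatrix B) (s : B) : Module.Dual ℝ (B →₀ ℝ) :=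
  Finsupp.linearCombination ℝ fun t => -2 * Real.cos (Real.pi / (M s t : ℝ))

theorem geomCoroot_single (M : CoxeterMatrix B) (s t : B) :
    geomCoroot M s (Finsupp.single t 1) = -2 * Real.cos (Real.pi / (M s t : ℝ)) := by
  simp [geomCoroot]

theorem geomCoroot_self (M : CoxeterMatrix B) (s : B) :
    geomCoroot M s (Finsupp.single s 1) = 2 := by
  simp [geomCoroot_single]

/-- The simple reflections of the geometric representation. -/
noncomputable def geomReflection (M : CoxeterMatrix B) (s : B) : (B →₀ ℝ) ≃ₗ[ℝ] (B →₀ ℝ) :=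
  Module.reflection (geomCoroot_self M s)

theorem sin_two_mul_pi_div_ne_zero {m : ℕ} (hm : 3 ≤ m) : Real.sin (2 * (Real.pi / m)) ≠ 0 := by
  have h3 : (3 : ℝ) ≤ m := by exact_mod_cast hm
  refine (Real.sin_pos_of_pos_of_lt_pi (by positivity) ?_).ne'
  have : Real.pi * (2 / m) < Real.pi * 1 := by
    gcongr
    rw [div_lt_one (by linarith)]
    linarith
  calc 2 * (Real.pi / m) = Real.pi * (2 / m) := by ring
    _ < Real.pi := by linarith

theorem geomReflection_isLiftable (M : CoxeterMatrix B) : M.IsLiftable (geomReflection M) := by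
  intro s t
  rcases eq_or_ne s t with rfl | hst
  · rw [M.diagonal s, pow_one]
    ext1 v
    exact Module.involutive_reflection (geomCoroot_self M s) v
  have hM1 : M s t ≠ 1 := M.off_diagonal s t hst
  rcases Nat.eq_zero_or_pos (M s t) with h0 | hpos
  · simp [h0]
  ext1 v
  rw [geomReflection, geomReflection, Module.reflection_mul_reflection_pow_apply
    (geomCoroot_self M s) (geomCoroot_self M t) (M s t) v]
  rw [geomCoroot_single, geomCoroot_single, M.symmetric t s]
  rcases (by omega : M s t = 2 ∨ 3 ≤ M s t) with h2 | h3
  · simp [h2]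
    module
  set m := M s t with hm
  set θ : ℝ := Real.pi / m with hθ
  have hmθ : (m : ℝ) * θ = Real.pi := by
    rw [hθ]; field_simp
  have hsin : Real.sin (2 * θ) ≠ 0 := sin_two_mul_pi_div_ne_zero h3
  have ht : -2 * Real.cos θ * (-2 * Real.cos θ) - 2 = 2 * Real.cos (2 * θ) := by
    rw [Real.cos_two_mul]; ring
  rw [ht]
  have hS := fun n : ℤ => Chebyshev.S_two_mul_real_cos (2 * θ) n
  have c1 : ((Chebyshev.S ℝ (((m : ℤ) - 2) / 2)).eval (2 * Real.cos (2 * θ)) *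
      ((Chebyshev.S ℝ (((m : ℤ) - 1) / 2)).eval (2 * Real.cos (2 * θ)) +
        (Chebyshev.S ℝ (((m : ℤ) - 3) / 2)).eval (2 * Real.cos (2 * θ)))) = 0 ∧
      ((Chebyshev.S ℝ (((m : ℤ) - 1) / 2)).eval (2 * Real.cos (2 * θ)) *
      ((Chebyshev.S ℝ ((m : ℤ) / 2)).eval (2 * Real.cos (2 * θ)) +
        (Chebyshev.S ℝ (((m : ℤ) - 2) / 2)).eval (2 * Real.cos (2 * θ)))) = 0 := by
    rcases Nat.even_or_odd' m with ⟨k, hk | hk⟩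
    · have e1 : ((m : ℤ) - 2) / 2 = k - 1 := by omega
      have e2 : ((m : ℤ) - 1) / 2 = k - 1 := by omega
      have h0 : (Chebyshev.S ℝ ((k : ℤ) - 1)).eval (2 * Real.cos (2 * θ)) = 0 := by
        have := hS ((k : ℤ) - 1)
        have h' : (((k : ℤ) - 1 : ℤ) + 1 : ℝ) * (2 * θ) = Real.pi := by
          rw [← hmθ, hk]; push_cast; ring
        rw [h', Real.sin_pi] at this
        exact (mul_eq_zero.1 this).resolve_right hsin
      rw [e1, e2, h0]
      simp
    · have e1 : ((m : ℤ) - 1) / 2 = k := by omega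
      have e2 : ((m : ℤ) - 3) / 2 = k - 1 := by omega
      have e3 : (m : ℤ) / 2 = k := by omega
      have e4 : ((m : ℤ) - 2) / 2 = k - 1 := by omega
      have h0 : (Chebyshev.S ℝ (k : ℤ)).eval (2 * Real.cos (2 * θ)) +
          (Chebyshev.S ℝ ((k : ℤ) - 1)).eval (2 * Real.cos (2 * θ)) = 0 := by
        have a1 := hS (k : ℤ)
        have a2 := hS ((k : ℤ) - 1)
        have h1 : (((k : ℤ) : ℝ) + 1 : ℝ) * (2 * θ) = θ + Real.pi := by
          rw [← hmθ, hk]; push_cast; ring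
        have h2 : (((k : ℤ) - 1 : ℤ) + 1 : ℝ) * (2 * θ) = Real.pi - θ := by
          rw [← hmθ, hk]; push_cast; ring
        rw [h1, Real.sin_add_pi] at a1
        rw [h2, Real.sin_pi_sub] at a2
        refine (mul_eq_zero.1 (?_ : _ * Real.sin (2 * θ) = 0)).resolve_right hsin
        rw [add_mul, a1, a2]; ring
      rw [e1, e2, e3, e4, h0]
      simp
  rw [c1.1, c1.2]
  simp

theorem simple_mul_simple_pow_ne_one {s t : B} (hst : s ≠ t) {j : ℕ} (hj : 0 < j)
    (hM : M s t = 0 ∨ j < M s t) : (cs.simple s * cs.simple t) ^ j ≠ 1 := by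
  intro h
  have hM1 : M s t ≠ 1 := M.off_diagonal s t hst
  have h' := congrArg (cs.lift ⟨_, geomReflection_isLiftable M⟩) h
  rw [map_pow, map_mul, cs.lift_apply_simple, cs.lift_apply_simple, map_one] at h'
  have h'' := congrArg (fun φ : (B →₀ ℝ) ≃ₗ[ℝ] (B →₀ ℝ) => φ (Finsupp.single s 1)) h'
  simp only [geomReflection] at h''
  rw [Module.reflection_mul_reflection_pow_apply_self, geomCoroot_single, geomCoroot_single,
    M.symmetric t s] at h''
  have hs := DFunLike.congr_fun h'' s
  have ht := DFunLike.congr_fun h'' t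
  simp only [Finsupp.coe_add, Finsupp.coe_smul, Pi.add_apply, Pi.smul_apply,
    Finsupp.single_eq_same, Finsupp.single_eq_of_ne hst, Finsupp.single_eq_of_ne hst.symm,
    LinearEquiv.coe_one, id_eq, smul_eq_mul, mul_one, mul_zero, add_zero, zero_add] at hs ht
  have hθt : ∀ θ : ℝ, -2 * Real.cos θ * (-2 * Real.cos θ) - 2 = 2 * Real.cos (2 * θ) := by
    intro θ
    rw [Real.cos_two_mul]; ring
  rw [hθt] at hs ht
  rcases (by omega : M s t = 0 ∨ M s t = 2 ∨ 3 ≤ M s t) with h0 | h2 | h3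
  · simp [h0, hj.ne'] at ht
  · obtain rfl : j = 1 := by omega
    have e : 2 * (Real.pi / (2 : ℝ)) = Real.pi := by ring
    norm_num [h2, e] at hs
  have hjm : j < M s t := by omega
  set m := M s t with hm
  set θ : ℝ := Real.pi / m with hθ
  have h3' : (3 : ℝ) ≤ m := by exact_mod_cast h3
  have hmθ : (m : ℝ) * θ = Real.pi := by
    rw [hθ]; field_simp
  have hθ0 : 0 < θ := by positivity
  have hsin : Real.sin (2 * θ) ≠ 0 := sin_two_mul_pi_div_ne_zero h3
  have hcos : Real.cos θ ≠ 0 := by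
    refine (Real.cos_pos_of_mem_Ioo ⟨by linarith [Real.pi_pos], ?_⟩).ne'
    nlinarith
  have hS := fun n : ℤ => Chebyshev.S_two_mul_real_cos (2 * θ) n
  have hS1 : (Chebyshev.S ℝ ((j : ℤ) - 1)).eval (2 * Real.cos (2 * θ)) = 0 := by
    refine (mul_eq_zero.1 ht).resolve_right ?_
    simpa using hcos
  rw [hS1, add_zero] at hs
  have a1 := hS ((j : ℤ) - 1)
  have a2 := hS (j : ℤ)
  rw [hS1, zero_mul] at a1
  rw [hs, one_mul] at a2
  have e1 : (((j : ℤ) - 1 : ℤ) + 1 : ℝ) * (2 * θ) = 2 * j * θ := by push_cast; ring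
  have e2 : (((j : ℤ) : ℝ) + 1) * (2 * θ) = 2 * j * θ + 2 * θ := by push_cast; ring
  rw [e1] at a1
  rw [e2, Real.sin_add, ← a1, zero_mul, zero_add] at a2
  have hc : Real.cos (2 * j * θ) = 1 := by
    have : (Real.cos (2 * j * θ) - 1) * Real.sin (2 * θ) = 0 := by linarith
    linarith [(mul_eq_zero.1 this).resolve_right hsin]
  have hj' : (0 : ℝ) < j := by exact_mod_cast hj
  have hjm' : (j : ℝ) < m := by exact_mod_cast hjm
  rw [Real.cos_eq_one_iff_of_lt_of_lt] at hc
  · have : 0 < 2 * j * θ := by positivity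
    linarith
  · have : 0 < 2 * j * θ := by positivity
    linarith [Real.pi_pos]
  · nlinarith

theorem simple_mul_pow_eq_inv_pow_mul {s t : B} (n : ℕ) :
    cs.simple t * (cs.simple s * cs.simple t) ^ n =
      ((cs.simple s * cs.simple t) ^ n)⁻¹ * cs.simple t := by
  induction n with
  | zero => simp
  | succ n ih =>
    rw [pow_succ, ← mul_assoc, ih, ← pow_succ, pow_succ', mul_inv_rev, mul_inv_rev, inv_simple,
      inv_simple]
    simp only [mul_assoc]

theorem rightInvSeq_alternatingWord_succ (s t : B) (k : ℕ) :
    cs.rightInvSeq (alternatingWord s t (k + 1)) =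
      cs.simple t * (cs.simple s * cs.simple t) ^ k :: cs.rightInvSeq (alternatingWord s t k) := by
  rw [alternatingWord_succ', rightInvSeq, prod_alternatingWord_eq_mul_pow]
  congr 1
  rcases Nat.even_or_odd' k with ⟨q, rfl | rfl⟩
  · simp only [even_two_mul, if_true, one_mul, Nat.mul_div_cancel_left q two_pos]
    rw [← simple_mul_pow_eq_inv_pow_mul, mul_assoc, ← pow_add, two_mul]
  · have h : (2 * q + 1) / 2 = q := by omega
    simp only [Nat.not_even_bit1, if_false, h, mul_inv_rev, inv_simple]
    rw [← simple_mul_pow_eq_inv_pow_mul, show 2 * q + 1 = q + 1 + q by ring, pow_add, pow_succ]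
    simp only [mul_assoc]

theorem rightInvSeq_alternatingWord (s t : B) (k : ℕ) :
    cs.rightInvSeq (alternatingWord s t k) =
      ((List.range k).map fun j => cs.simple t * (cs.simple s * cs.simple t) ^ j).reverse := by
  induction k with
  | zero => simp [alternatingWord]
  | succ k ih => rw [rightInvSeq_alternatingWord_succ, ih, List.range_succ]; simp

open Classical in
/-- The action of a simple reflection on pairs (group element, sign). -/
noncomputable def signedConj (i : B) : Function.End (W × ZMod 2) := fun p =>
  (cs.simple i * p.1 * cs.simple i, p.2 + if p.1 = cs.simple i then 1 else 0)

open Classical in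
theorem prod_map_signedConj (l : List B) (p : W × ZMod 2) :
    (l.map cs.signedConj).prod p =
      (cs.wordProd l * p.1 * (cs.wordProd l)⁻¹, p.2 + ((cs.rightInvSeq l).count p.1 : ℕ)) := by
  induction l with
  | nil => simp; rfl
  | cons i l ih =>
    rw [List.map_cons, List.prod_cons]
    change cs.signedConj i ((l.map cs.signedConj).prod p) = _
    rw [ih]
    have h : cs.wordProd l * p.1 * (cs.wordProd l)⁻¹ = cs.simple i ↔
        (cs.wordProd l)⁻¹ * cs.simple i * cs.wordProd l = p.1 := by
      constructor
      · intro h; rw [← h]; group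
      · intro h; rw [← h]; group
    ext
    · simp [signedConj, wordProd_cons, mul_assoc]
    · simp only [signedConj, rightInvSeq, List.count_cons, beq_iff_eq, h]
      push_cast
      ring

theorem signedConj_isLiftable : M.IsLiftable cs.signedConj := by
  classical
  intro s t
  funext p
  have h1 : ∀ m, (cs.signedConj s * cs.signedConj t) ^ m =
      ((alternatingWord s t (2 * m)).map cs.signedConj).prod := by
    intro m
    induction m with
    | zero => simp [alternatingWord]
    | succ m ih =>
      rw [show 2 * (m + 1) = 2 * m + 1 + 1 by ring, alternatingWord_succ', alternatingWord_succ',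
        pow_succ', ih]
      simp [mul_assoc]
  rw [h1, prod_map_signedConj]
  have h2 : cs.wordProd (alternatingWord s t (2 * M s t)) = 1 := by
    rw [prod_alternatingWord_eq_mul_pow]
    simp
  have h3 : Even ((cs.rightInvSeq (alternatingWord s t (2 * M s t))).count p.1) := by
    rw [rightInvSeq_alternatingWord, List.count_reverse, two_mul, List.range_add, List.map_append,
      List.count_append, List.map_map]
    have : ((fun j => cs.simple t * (cs.simple s * cs.simple t) ^ j) ∘ fun x => M s t + x) =
        fun j => cs.simple t * (cs.simple s * cs.simple t) ^ j := by
      funext j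
      simp [pow_add]
    rw [this]
    exact ⟨_, rfl⟩
  rw [h2, (ZMod.natCast_eq_zero_iff_even).2 h3]
  simp
  rfl

theorem simple_mem_rightInvSeq {l : List B} {i : B} (h : cs.IsRightDescent (cs.wordProd l) i) :
    cs.simple i ∈ cs.rightInvSeq l := by
  classical
  obtain ⟨l', hl', hp⟩ := cs.exists_isReduced (cs.wordProd l * cs.simple i)
  have hlen := cs.isRightDescent_iff.1 h
  have hp' : cs.wordProd (l'.concat i) = cs.wordProd l := by
    rw [wordProd_concat, ← hp]; simp
  have hred : cs.IsReduced (l'.concat i) := by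
    rw [IsReduced, hp', ← hlen, hp, hl'.eq]; simp
  have hcount : (cs.rightInvSeq (l'.concat i)).count (cs.simple i) = 1 := by
    refine List.count_eq_one_of_mem hred.nodup_rightInvSeq ?_
    rw [rightInvSeq_concat]; simp
  have hlift : ∀ k : List B, (k.map cs.signedConj).prod =
      cs.lift ⟨_, cs.signedConj_isLiftable⟩ (cs.wordProd k) := by
    intro k
    induction k with
    | nil => simp
    | cons j k ih => rw [wordProd_cons, map_mul, ← ih, lift_apply_simple]; simp
  have key := congrArg (fun f => (f (cs.simple i, 0)).2)
    ((hlift (l'.concat i)).trans ((congrArg _ hp').trans (hlift l).symm))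
  simp only [prod_map_signedConj, hcount] at key
  by_contra hmem
  rw [List.count_eq_zero_of_not_mem hmem] at key
  simp at key

theorem mem_rightInvSeq_append {l₁ l₂ : List B} {r : W} :
    r ∈ cs.rightInvSeq (l₁ ++ l₂) ↔
      cs.wordProd l₂ * r * (cs.wordProd l₂)⁻¹ ∈ cs.rightInvSeq l₁ ∨ r ∈ cs.rightInvSeq l₂ := by
  induction l₁ with
  | nil => simp
  | cons i l ih =>
    rw [List.cons_append, rightInvSeq, rightInvSeq, List.mem_cons, List.mem_cons, ih, ← or_assoc,
      wordProd_append]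
    refine or_congr (or_congr ?_ Iff.rfl) Iff.rfl
    constructor
    · rintro rfl; group
    · intro h
      have : r = (cs.wordProd l₂)⁻¹ * (cs.wordProd l₂ * r * (cs.wordProd l₂)⁻¹) * cs.wordProd l₂ := by
        group
      rw [this, h]; group

theorem length_mul_lt_of_mem_rightInvSeq {l : List B} {r : W} (h : r ∈ cs.rightInvSeq l) :
    cs.length (cs.wordProd l * r) < l.length := by
  obtain ⟨j, hj, rfl⟩ := List.mem_iff_getElem.1 h
  rw [length_rightInvSeq] at hj
  have := cs.wordProd_mul_getD_rightInvSeq l j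
  rw [List.getD_eq_getElem _ _ (by simpa using hj)] at this
  rw [this]
  refine (cs.length_wordProd_le _).trans_lt ?_
  rw [List.length_eraseIdx_of_lt hj]
  omega

theorem _root_.FullyComm.left {w a b : W} (hw : FullyComm cs w) (h : w = a * b)
    (hl : cs.length w = cs.length a + cs.length b) : FullyComm cs a := by
  rintro ⟨s, t, hM, x₁, x₂, ha, hla⟩
  refine hw ⟨s, t, hM, x₁, x₂ * b, by rw [h, ha, mul_assoc], ?_⟩
  have h1 := cs.length_mul_le x₂ b
  have h2 := cs.length_mul_le (x₁ * longest cs s t) (x₂ * b)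
  have h3 := cs.length_mul_le x₁ (longest cs s t)
  rw [← mul_assoc, ← ha, ← h] at h2
  omega

theorem exists_eq_mul_alternatingWord {x : W} {s t : B} (hst : s ≠ t)
    (hs : cs.IsRightDescent x s) (ht : cs.IsRightDescent x t) {k : ℕ}
    (hk : M s t = 0 ∨ k ≤ M s t) :
    ∃ z, x = z * cs.wordProd (alternatingWord s t k) ∧ cs.length x = cs.length z + k := by
  induction k generalizing s t with
  | zero => exact ⟨x, by simp [alternatingWord], rfl⟩
  | succ k ih =>
    obtain ⟨z, hx, hlx⟩ := ih hst.symm ht hs (by rw [M.symmetric]; omega)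
    obtain ⟨l, hl, rfl⟩ := cs.exists_isReduced z
    rw [← wordProd_append] at hx
    have hmem := cs.simple_mem_rightInvSeq (hx ▸ ht)
    rw [mem_rightInvSeq_append] at hmem
    rcases hmem with hmem | hmem
    · have hlt := cs.length_mul_lt_of_mem_rightInvSeq hmem
      set A := cs.wordProd (alternatingWord t s k) with hA
      have hx' : x = cs.wordProd l * (A * cs.simple t * A⁻¹) *
          cs.wordProd (alternatingWord s t (k + 1)) := by
        rw [alternatingWord_succ, wordProd_concat, ← hA, hx, wordProd_append, ← hA]
        simp [mul_assoc]
      refine ⟨_, hx', ?_⟩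
      have h1 := cs.length_mul_le (cs.wordProd l * (A * cs.simple t * A⁻¹))
        (cs.wordProd (alternatingWord s t (k + 1)))
      have h2 := cs.length_wordProd_le (alternatingWord s t (k + 1))
      rw [length_alternatingWord] at h2
      rw [← hx'] at h1
      rw [hl.eq] at hlx
      omega
    · rw [rightInvSeq_alternatingWord] at hmem
      simp only [List.mem_reverse, List.mem_map, List.mem_range] at hmem
      obtain ⟨j, hj, hjeq⟩ := hmem
      refine absurd ?_ (cs.simple_mul_simple_pow_ne_one hst.symm (Nat.succ_pos j)
        (by rw [M.symmetric]; omega))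
      rw [pow_succ', mul_assoc, hjeq, simple_mul_simple_self]

theorem coxeterMatrix_eq_two_of_isRightDescent {x : W} (hx : FullyComm cs x) {s t : B}
    (hst : s ≠ t) (hs : cs.IsRightDescent x s) (ht : cs.IsRightDescent x t) : M s t = 2 := by
  have h1 := M.off_diagonal s t hst
  by_contra h2
  rcases (by omega : M s t = 0 ∨ 3 ≤ M s t) with h0 | h3
  · obtain ⟨z, -, hl⟩ := cs.exists_eq_mul_alternatingWord hst hs ht (k := cs.length x + 1)
      (Or.inl h0)
    omega
  · obtain ⟨z, hz, hl⟩ := cs.exists_eq_mul_alternatingWord hst hs ht (k := M s t) (Or.inr le_rfl)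
    refine hx ⟨s, t, h3, z, 1, by rw [hz, longest, mul_one], ?_⟩
    have h4 := cs.length_mul_le z (longest cs s t)
    have h5 := cs.length_wordProd_le (alternatingWord s t (M s t))
    rw [length_alternatingWord] at h5
    rw [longest] at h4 ⊢
    rw [← hz] at h4
    rw [length_one]
    omega

theorem simple_commute {s t : B} (h : M s t = 2) : Commute (cs.simple s) (cs.simple t) := by
  have h1 := cs.simple_mul_simple_pow s t
  rw [h, pow_two, mul_eq_one_iff_eq_inv, mul_inv_rev, inv_simple, inv_simple] at h1
  exact h1

theorem isRightDescent_mul_simple {x : W} {s t : B} (hst : M s t = 2)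
    (hs : cs.IsRightDescent x s) (ht : cs.IsRightDescent x t) :
    cs.IsRightDescent (x * cs.simple s) t := by
  have hne : s ≠ t := by rintro rfl; simp at hst
  obtain ⟨z, hz, hl⟩ := cs.exists_eq_mul_alternatingWord hne hs ht (k := 2) (by omega)
  have h1 : x * cs.simple s * cs.simple t = z := by
    rw [hz, mul_assoc z, mul_assoc, mul_assoc, (cs.simple_commute hst).eq]
    simp [alternatingWord, wordProd_cons, mul_assoc]
  have h2 := cs.isRightDescent_iff.1 hs
  rw [IsRightDescent, h1]
  omega

theorem simple_commute_wordProd {t : B} {l : List B} (h : ∀ r ∈ l, M r t = 2) :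
    Commute (cs.wordProd l) (cs.simple t) := by
  induction l with
  | nil => simp
  | cons i l ih =>
    rw [wordProd_cons]
    exact (cs.simple_commute (h i (by simp))).mul_left (ih fun r hr => h r (by simp [hr]))

/-- A right descent of a reduced product `z * y` is either a right descent of `y`, or it commutes
with every letter of `y` and is a right descent of `z`. -/
theorem isRightDescent_or_commute {z : W} {l : List B} {t : B}
    (hx : FullyComm cs (z * cs.wordProd l))
    (hl : cs.length (z * cs.wordProd l) = cs.length z + l.length)
    (ht : cs.IsRightDescent (z * cs.wordProd l) t) :
    cs.IsRightDescent (cs.wordProd l) t ∨ (∀ r ∈ l, M r t = 2) ∧ cs.IsRightDescent z t := by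
  induction l using List.reverseRecOn with
  | nil => exact Or.inr ⟨by simp, by simpa using ht⟩
  | append_singleton l r ih =>
    have hprod : cs.wordProd (l ++ [r]) = cs.wordProd l * cs.simple r := by
      simp [wordProd_append]
    rw [hprod] at hx hl ht ⊢
    have h1 := cs.length_mul_le z (cs.wordProd l)
    have h2 := cs.length_wordProd_le l
    have h3 := cs.length_mul_le (z * cs.wordProd l) (cs.simple r)
    have h4 := cs.length_mul_le z (cs.wordProd l * cs.simple r)
    have h5 := cs.length_mul_le (cs.wordProd l) (cs.simple r)
    rw [length_simple] at h3 h5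
    rw [List.length_append, List.length_singleton] at hl
    rw [mul_assoc] at h3
    rcases eq_or_ne r t with rfl | hrt
    · left
      rw [IsRightDescent, simple_mul_simple_cancel_right]
      omega
    have hr : cs.IsRightDescent (z * (cs.wordProd l * cs.simple r)) r := by
      rw [IsRightDescent, ← mul_assoc, simple_mul_simple_cancel_right, mul_assoc]
      omega
    have hM := cs.coxeterMatrix_eq_two_of_isRightDescent hx hrt hr ht
    have ht' := cs.isRightDescent_mul_simple hM hr ht
    rw [← mul_assoc, simple_mul_simple_cancel_right] at ht'
    rcases ih (FullyComm.left cs hx (mul_assoc _ _ _).symm (by rw [length_simple]; omega))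
      (by omega) ht' with hd | ⟨hc, hd⟩
    · left
      have h6 := cs.length_mul_le (cs.wordProd l * cs.simple t) (cs.simple r)
      rw [IsRightDescent] at hd ⊢
      rw [mul_assoc, (cs.simple_commute hM).eq, ← mul_assoc]
      rw [length_simple] at h6
      omega
    · refine Or.inr ⟨fun q hq => ?_, hd⟩
      rcases List.mem_append.1 hq with hq | hq
      · exact hc q hq
      · rwa [List.mem_singleton.1 hq]

theorem simple_injective : Function.Injective cs.simple := by
  intro s t h
  by_contra hst
  have h1 := M.off_diagonal s t hst
  refine cs.simple_mul_simple_pow_ne_one hst one_pos (by omega) ?_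
  rw [h, pow_one, simple_mul_simple_self]

theorem mem_of_isRightDescent_wordProd {l : List B}
    (hl : ∀ u ∈ l, ∀ u' ∈ l, u ≠ u' → M u u' = 2) {t : B}
    (ht : cs.IsRightDescent (cs.wordProd l) t) : t ∈ l := by
  have hmem := cs.simple_mem_rightInvSeq ht
  have key : ∀ l : List B, (∀ u ∈ l, ∀ u' ∈ l, u ≠ u' → M u u' = 2) →
      ∀ r ∈ cs.rightInvSeq l, ∃ i ∈ l, r = cs.simple i := by
    intro l
    induction l with
    | nil => simp
    | cons i l ih =>
      intro hl r hr
      rw [rightInvSeq, List.mem_cons] at hr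
      rcases hr with rfl | hr
      · refine ⟨i, by simp, ?_⟩
        have hc : Commute (cs.wordProd l) (cs.simple i) := by
          refine Commute.list_prod_left _ _ fun y hy => ?_
          obtain ⟨j, hj, rfl⟩ := List.mem_map.1 hy
          rcases eq_or_ne j i with rfl | hji
          · rfl
          · exact cs.simple_commute (hl j (by simp [hj]) i (by simp) hji)
        rw [mul_assoc, ← hc.eq, inv_mul_cancel_left]
      · obtain ⟨j, hj, rfl⟩ := ih (fun u hu u' hu' => hl u (by simp [hu]) u' (by simp [hu'])) r hr
        exact ⟨j, by simp [hj], rfl⟩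
  obtain ⟨i, hi, h⟩ := key l hl _ hmem
  rwa [cs.simple_injective h]

theorem wordProd_eq_wordProd_erase_mul [DecidableEq B] {l : List B}
    (hl : ∀ u ∈ l, ∀ u' ∈ l, u ≠ u' → M u u' = 2) {s : B} (hs : s ∈ l) :
    cs.wordProd l = cs.simple s * cs.wordProd (l.erase s) := by
  rw [← wordProd_cons]
  refine ((List.perm_cons_erase hs).map _).prod_eq' ?_
  refine List.Pairwise.map _ (fun _ _ h => h) (List.pairwise_of_forall_mem_list ?_)
  intro a ha b hb
  rcases eq_or_ne a b with rfl | hab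
  · exact Commute.refl _
  · exact cs.simple_commute (hl a ha b hb hab)

/-- The set of sizes of commuting factors of `w`, whose supremum is `nval cs w`. -/
def commSizes (w : W) : Set ℕ :=
  {k | ∃ w₁ w₂ w₃ : W, w = w₁ * w₂ * w₃ ∧
    cs.length w = cs.length w₁ + cs.length w₂ + cs.length w₃ ∧
    IsCommProd cs w₂ ∧ cs.length w₂ = k}

theorem commSizes_mul_simple_subset {w : W} {s : B} (hs : cs.IsRightDescent w s) :
    cs.commSizes (w * cs.simple s) ⊆ cs.commSizes w := by
  rintro k ⟨w₁, w₂, w₃, hx, hl, hc, hk⟩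
  have hw : w = w₁ * w₂ * (w₃ * cs.simple s) := by
    rw [← mul_assoc, ← hx, simple_mul_simple_cancel_right]
  refine ⟨w₁, w₂, w₃ * cs.simple s, hw, ?_, hc, hk⟩
  have h1 := cs.isRightDescent_iff.1 hs
  have h2 := cs.length_mul_le (w₁ * w₂) (w₃ * cs.simple s)
  have h3 := cs.length_mul_le w₁ w₂
  have h4 := cs.length_mul_le w₃ (cs.simple s)
  rw [← hw] at h2
  rw [length_simple] at h4
  omega

/-- A right descent of a reduced product `z * y` which is not a right descent of `y` commutes
with `y` and with every right descent of `y`, and is a right descent of `z`. -/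
theorem commute_and_isRightDescent_of_not_isRightDescent {z y : W} {t : B} (hx : FullyComm cs (z * y))
    (hl : cs.length (z * y) = cs.length z + cs.length y) (ht : cs.IsRightDescent (z * y) t)
    (hy : ¬ cs.IsRightDescent y t) :
    Commute y (cs.simple t) ∧ (∀ s, cs.IsRightDescent y s → M s t = 2) ∧
      cs.IsRightDescent z t := by
  have key : ∀ l, cs.IsReduced l → y = cs.wordProd l →
      (∀ r ∈ l, M r t = 2) ∧ cs.IsRightDescent z t := by
    rintro l hred rfl
    exact (cs.isRightDescent_or_commute hx (by rw [hl, hred.eq]) ht).resolve_left hy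
  obtain ⟨l, hred, hyl⟩ := cs.exists_isReduced y
  refine ⟨hyl ▸ cs.simple_commute_wordProd (key l hred hyl).1, fun s hs => ?_, (key l hred hyl).2⟩
  obtain ⟨l', hred', hyl'⟩ := cs.exists_isReduced (y * cs.simple s)
  have hy' : y = cs.wordProd (l' ++ [s]) := by
    rw [wordProd_append, ← hyl']; simp
  refine (key (l' ++ [s]) ?_ hy').1 s (by simp)
  rw [IsReduced, ← hy', ← cs.isRightDescent_iff.1 hs, hyl', hred'.eq]
  simp

theorem commSizes_subset_mul_simple {w : W} {s t : B} (hw : FullyComm cs w)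
    (hst : Noncomm M s t) (hs : cs.IsRightDescent w s)
    (ht : cs.IsRightDescent (w * cs.simple s) t) :
    cs.commSizes w ⊆ cs.commSizes (w * cs.simple s) := by
  classical
  have hst2 : M s t ≠ 2 := by rcases hst with h | h <;> omega
  have hne : s ≠ t := by
    rintro rfl
    rcases hst with h | h <;> simp at h
  have hlw := cs.isRightDescent_iff.1 hs
  rintro k ⟨w₁, w₂, w₃, rfl, hl, hc, rfl⟩
  have b1 := cs.length_mul_le (w₁ * w₂) w₃
  have b2 := cs.length_mul_le w₁ w₂
  by_cases hs₃ : cs.IsRightDescent w₃ s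
  · have := cs.isRightDescent_iff.1 hs₃
    exact ⟨w₁, w₂, w₃ * cs.simple s, by rw [← mul_assoc], by omega, hc, rfl⟩
  obtain ⟨hc₃, hM₃, hs₁₂⟩ := cs.commute_and_isRightDescent_of_not_isRightDescent hw (by omega) hs hs₃
  have hw₁₂ : FullyComm cs (w₁ * w₂) := FullyComm.left cs hw rfl (by omega)
  by_cases hs₂ : cs.IsRightDescent w₂ s
  swap
  · obtain ⟨hc₂, -, hs₁⟩ := cs.commute_and_isRightDescent_of_not_isRightDescent hw₁₂ (by omega) hs₁₂ hs₂
    have := cs.isRightDescent_iff.1 hs₁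
    refine ⟨w₁ * cs.simple s, w₂, w₃, ?_, by omega, hc, rfl⟩
    rw [mul_assoc, hc₃.eq, ← mul_assoc, mul_assoc w₁, hc₂.eq, ← mul_assoc]
  obtain ⟨l, hnd, hcomm, hred, rfl⟩ := hc
  have hsl : s ∈ l := cs.mem_of_isRightDescent_wordProd hcomm hs₂
  have hl' : ∀ u ∈ l.erase s, u ∈ l ∧ u ≠ s := fun u hu =>
    ⟨List.mem_of_mem_erase hu, (hnd.mem_erase_iff.1 hu).1⟩
  have hlen : (l.erase s).length + 1 = l.length := List.length_erase_add_one hsl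
  have hcs : Commute (cs.wordProd (l.erase s)) (cs.simple s) :=
    cs.simple_commute_wordProd fun r hr => hcomm r (hl' r hr).1 s hsl (hl' r hr).2
  have hws : w₁ * cs.wordProd l * w₃ * cs.simple s = w₁ * cs.wordProd (l.erase s) * w₃ := by
    rw [mul_assoc, hc₃.eq, cs.wordProd_eq_wordProd_erase_mul hcomm hsl, ← hcs.eq]
    simp only [mul_assoc, simple_mul_simple_cancel_left]
  have hx : FullyComm cs (w₁ * cs.wordProd l * w₃ * cs.simple s) :=
    FullyComm.left cs hw (cs.simple_mul_simple_cancel_right s).symm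
      (by rw [length_simple]; exact hlw.symm)
  rw [hred.eq] at *
  rw [hws] at ht hx hlw ⊢
  have d1 := cs.length_mul_le (w₁ * cs.wordProd (l.erase s)) w₃
  have d2 := cs.length_mul_le w₁ (cs.wordProd (l.erase s))
  have d3 := cs.length_wordProd_le (l.erase s)
  have ht₃ : ¬ cs.IsRightDescent w₃ t := fun h => hst2 (M.symmetric t s ▸ hM₃ t h)
  obtain ⟨hct₃, -, ht₁₂⟩ := cs.commute_and_isRightDescent_of_not_isRightDescent hx (by omega) ht ht₃
  have hcomm' : ∀ u ∈ l.erase s, ∀ u' ∈ l.erase s, u ≠ u' → M u u' = 2 :=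
    fun u hu u' hu' => hcomm u (hl' u hu).1 u' (hl' u' hu').1
  have hx₁₂ : FullyComm cs (w₁ * cs.wordProd (l.erase s)) := FullyComm.left cs hx rfl (by omega)
  rcases cs.isRightDescent_or_commute hx₁₂ (by omega) ht₁₂ with ht₂ | ⟨hMt, ht₁⟩
  · exact absurd (hcomm s hsl t (hl' t (cs.mem_of_isRightDescent_wordProd hcomm' ht₂)).1 hne) hst2
  have e1 := cs.isRightDescent_iff.1 ht₁
  have hx' : w₁ * cs.wordProd (l.erase s) * w₃ =
      w₁ * cs.simple t * cs.wordProd (t :: l.erase s) * w₃ := by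
    rw [wordProd_cons]
    simp only [mul_assoc, simple_mul_simple_cancel_left]
  have e2 := cs.length_mul_le (w₁ * cs.simple t * cs.wordProd (t :: l.erase s)) w₃
  have e3 := cs.length_mul_le (w₁ * cs.simple t) (cs.wordProd (t :: l.erase s))
  have e4 := cs.length_wordProd_le (t :: l.erase s)
  rw [← hx'] at e2
  rw [List.length_cons] at e4
  refine ⟨w₁ * cs.simple t, cs.wordProd (t :: l.erase s), w₃, hx', by omega,
    ⟨t :: l.erase s, ?_, ?_, ?_, rfl⟩, by omega⟩
  · refine List.nodup_cons.2 ⟨fun h => ?_, hnd.erase s⟩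
    have := hMt t h
    simp at this
  · intro u hu u' hu' huu'
    rcases List.mem_cons.1 hu with rfl | hul <;> rcases List.mem_cons.1 hu' with rfl | hul'
    · exact absurd rfl huu'
    · rw [M.symmetric]; exact hMt u' hul'
    · exact hMt u hul
    · exact hcomm' u hul u' hul' huu'
  · rw [IsReduced, List.length_cons]
    omega

theorem nval_mul_simple {w : W} {s t : B} (hw : FullyComm cs w) (hst : Noncomm M s t)
    (hs : cs.IsRightDescent w s) (ht : cs.IsRightDescent (w * cs.simple s) t) :
    nval cs (w * cs.simple s) = nval cs w :=
  congrArg sSup ((cs.commSizes_mul_simple_subset hs).antisymm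
    (cs.commSizes_subset_mul_simple hw hst hs ht))

theorem _root_.IsCommProd.inv {w : W} (h : IsCommProd cs w) : IsCommProd cs w⁻¹ := by
  obtain ⟨l, hnd, hcomm, hred, rfl⟩ := h
  exact ⟨l.reverse, List.nodup_reverse.2 hnd, by simpa using hcomm, hred.reverse,
    (cs.wordProd_reverse l).symm⟩

theorem nval_inv (w : W) : nval cs w⁻¹ = nval cs w := by
  have key : ∀ w : W, cs.commSizes w ⊆ cs.commSizes w⁻¹ := by
    rintro _ k ⟨w₁, w₂, w₃, rfl, hl, hc, rfl⟩
    refine ⟨w₃⁻¹, w₂⁻¹, w₁⁻¹, by simp [mul_assoc], ?_, IsCommProd.inv cs hc, cs.length_inv _⟩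
    simp only [length_inv]
    omega
  have h := key w⁻¹
  rw [inv_inv] at h
  exact congrArg sSup (h.antisymm (key w))

theorem longest_inv (s t : B) :
    (longest cs s t)⁻¹ = longest cs s t ∨ (longest cs s t)⁻¹ = longest cs t s := by
  simp only [longest, M.symmetric t s, prod_alternatingWord_eq_mul_pow]
  by_cases h : Even (M s t)
  · right
    simp [h, ← inv_pow]
  · left
    simp only [h, if_false, mul_inv_rev, inv_simple]
    rw [simple_mul_pow_eq_inv_pow_mul]

theorem _root_.FullyComm.inv {w : W} (hw : FullyComm cs w) : FullyComm cs w⁻¹ := by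
  rintro ⟨s, t, hM, x₁, x₂, h, hl⟩
  have hw' : w = x₂⁻¹ * (longest cs s t)⁻¹ * x₁⁻¹ := by
    rw [← inv_inv w, h]; simp [mul_assoc]
  rw [length_inv] at hl
  rw [← cs.length_inv (longest cs s t)] at hl
  rcases cs.longest_inv s t with h' | h' <;> rw [h'] at hw' hl
  · exact hw ⟨s, t, hM, x₂⁻¹, x₁⁻¹, hw', by simp only [length_inv]; omega⟩
  · exact hw ⟨t, s, M.symmetric t s ▸ hM, x₂⁻¹, x₁⁻¹, hw', by simp only [length_inv]; omega⟩

theorem nval_simple_mul {w : W} {s t : B} (hw : FullyComm cs w) (hst : Noncomm M s t)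
    (hs : cs.IsLeftDescent w s) (ht : cs.IsLeftDescent (cs.simple s * w) t) :
    nval cs (cs.simple s * w) = nval cs w := by
  have h : (cs.simple s * w)⁻¹ = w⁻¹ * cs.simple s := by simp
  rw [← nval_inv, ← nval_inv cs w, h]
  refine cs.nval_mul_simple (FullyComm.inv cs hw) hst (cs.isRightDescent_inv_iff.2 hs) ?_
  rw [← h]
  exact cs.isRightDescent_inv_iff.2 ht

end CoxeterSystem

theorem Noncomm.symm {s t : B} (h : Noncomm M s t) : Noncomm M t s := by
  rwa [Noncomm, M.symmetric]

/-- Lemma 7.2: if `w ∈ W_c` is left (or right) star reducible to `x ∈ W_c`, then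
`n(x) = n(w)`. -/
theorem statement7 (w x : W) (hw : FullyComm cs w) (hx : FullyComm cs x)
    (h : ∃ s t : B, LeftStarReducible cs s t w x ∨ RightStarReducible cs s t w x) :
    nval cs x = nval cs w := by
  obtain ⟨s, t, ⟨hst, h | h⟩ | ⟨hst, h | h⟩⟩ := h <;> obtain ⟨h₁, -, rfl, h₂⟩ := h
  · exact cs.nval_simple_mul hw hst h₁ h₂
  · exact cs.nval_simple_mul hw hst.symm h₁ h₂
  · exact cs.nval_mul_simple hw hst h₁ h₂
  · exact cs.nval_mul_simple hw hst.symm h₁ h₂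
end
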